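/- arXiv:1908.02829 — 5 statements merged into one kernel-verified Lean document; each statement's English description precedes it below -/
import Mathlib

section
/- Consider the toric code: Kitaev's model for G = ℤ₂ on an L×L periodic square lattice on the torus, with ground space projector P = ∏_{v∈V} (1+X_v)/2 · ∏_{p∈F} (1+Z_p)/2. Let k ≤ ⌊(L−1)/2⌋ and let 𝓔(k) be the set of all tensor products of Pauli operators X, Y, Z acting on at most k edges. Then for all E_i, E_j ∈ 𝓔(k), either P E_i† E_j P = 0 or E_i† E_j acts on the ground space as a scalar multiple of the identity; hence P E_i† E_j P = α_{ij} P for a Hermitian matrix (α_{ij}), and the Knill–Laflamme condition holds, so the toric code corrects all errors on at most ⌊(L−1)/2⌋ qubits. -/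
/-!
Kitaev's quantum double model, formalized on the concrete `L × L` periodic square
lattice on the torus (the setting of Bravyi–Hastings–Michalakis TQO conditions used
in the paper).  Vertices are `ZMod L × ZMod L`; an oriented edge is a pair
`(v, d)` of its base vertex `v` and a direction `d : Bool` (`false` = rightward,
`true` = upward).  Each edge carries `ℂ[G]`, so the total Hilbert space is
`(Edge L → G) → ℂ` with the "group basis" given by delta functions.
"Contained in a contractible subregion" is rendered as the rectangle having side
lengths `< L`, i.e. not wrapping around the torus.
-/

open scoped BigOperators Classical

noncomputable section

namespace QDM

/-- Vertices of the `L × L` periodic square lattice on the torus. -/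
abbrev Vtx (L : ℕ) := ZMod L × ZMod L

/-- Oriented edges: base vertex together with a direction
(`false` = rightward, `true` = upward). -/
abbrev Edge (L : ℕ) := (ZMod L × ZMod L) × Bool

/-- Source vertex of an edge. -/
def src {L : ℕ} (e : Edge L) : Vtx L := e.1

/-- Target vertex of an edge. -/
def tgt {L : ℕ} (e : Edge L) : Vtx L := if e.2 then e.1 + (0, 1) else e.1 + (1, 0)

/-- A step of a path: an edge together with a direction of traversal
(`true` = along the orientation of the edge, `false` = against it). -/
abbrev Step (L : ℕ) := Edge L × Bool

/-- Initial vertex of a step. -/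
def stepStart {L : ℕ} (s : Step L) : Vtx L := if s.2 then src s.1 else tgt s.1

/-- Final vertex of a step. -/
def stepEnd {L : ℕ} (s : Step L) : Vtx L := if s.2 then tgt s.1 else src s.1

/-- A (nonempty) closed loop: consecutive steps are linked and the last step ends
where the first begins. -/
def IsLoop {L : ℕ} (γ : List (Step L)) : Prop :=
  γ ≠ [] ∧ γ.Chain' (fun a b => stepEnd a = stepStart b) ∧
    ∀ a ∈ γ.head?, ∀ b ∈ γ.getLast?, stepEnd b = stepStart a

/-- A (possibly empty) closed loop based at `v₀`. -/
def IsLoopAt {L : ℕ} (v₀ : Vtx L) (γ : List (Step L)) : Prop :=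
  γ.Chain' (fun a b => stepEnd a = stepStart b) ∧
    (∀ a ∈ γ.head?, stepStart a = v₀) ∧ ∀ b ∈ γ.getLast?, stepEnd b = v₀

/-- A classical field configuration: one group element per edge.  The group-basis
state `|g⟩` of the paper corresponds to the delta function `deltaF g`. -/
abbrev Config (G : Type) (L : ℕ) := Edge L → G

/-- Holonomy of a configuration along a path: the ordered product of the edge
elements, inverting the elements on edges traversed against their orientation. -/
def hol {G : Type} [Group G] {L : ℕ} (x : Config G L) (γ : List (Step L)) : G :=
  (γ.map fun s => if s.2 then x s.1 else (x s.1)⁻¹).prod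

/-- The counterclockwise boundary loop of the plaquette whose lower-left corner
is `p`. -/
def plaqBoundary {L : ℕ} (p : Vtx L) : List (Step L) :=
  [((p, false), true), ((p + (1, 0), true), true),
   ((p + (0, 1), false), false), ((p, true), false)]

/-- Action on configurations of the local gauge transformation `A_v(h)`:
left multiplication by `h` on edges oriented away from `v`, right multiplication
by `h⁻¹` on edges oriented towards `v`. -/
def gaugeOne {G : Type} [Group G] {L : ℕ} (v : Vtx L) (h : G) (x : Config G L) :
    Config G L :=
  fun e => (if src e = v then h else 1) * x e * (if tgt e = v then h⁻¹ else 1)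

/-- Action on configurations of the product of the gauge transformations
`A_v(f v)` over all vertices `v`. -/
def gaugeAll {G : Type} [Group G] {L : ℕ} (f : Vtx L → G) (x : Config G L) :
    Config G L :=
  fun e => f (src e) * x e * (f (tgt e))⁻¹

/-! ### Hilbert space and operators -/

/-- The total Hilbert space `⊗_{e ∈ E} ℂ[G]`, realized as functions on the set of
group-basis labels. -/
abbrev H (G : Type) (L : ℕ) := Config G L → ℂ

/-- The standard inner product (antilinear in the first slot) on a finite
function space. -/
def finner {α : Type} [Fintype α] (ψ φ : α → ℂ) : ℂ :=
  ∑ x : α, (starRingEnd ℂ) (ψ x) * φ x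

/-- The basis state `|y⟩` as a delta function. -/
def deltaF {α : Type} (y : α) : α → ℂ := fun x => if x = y then 1 else 0

/-- Diagonal (in the given basis) operator with diagonal entries `c`. -/
def diagOpF {α : Type} (c : α → ℂ) : (α → ℂ) →ₗ[ℂ] (α → ℂ) where
  toFun ψ := fun x => c x * ψ x
  map_add' ψ φ := by funext x; simp [mul_add]
  map_smul' r ψ := by
    funext x
    simp only [Pi.smul_apply, smul_eq_mul, RingHom.id_apply]
    ring

/-- The adjoint of an operator with respect to the standard inner product. -/
noncomputable def adjOp {α : Type} [Fintype α] (O : (α → ℂ) →ₗ[ℂ] (α → ℂ)) :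
    (α → ℂ) →ₗ[ℂ] (α → ℂ) :=
  Matrix.toLin' (Matrix.conjTranspose (LinearMap.toMatrix' O))

/-- `P` is the orthogonal projector onto the subspace `W` (with respect to the
standard inner product): idempotent, self-adjoint, with range `W`. -/
def IsOrthProjOnto {α : Type} [Fintype α] (P : (α → ℂ) →ₗ[ℂ] (α → ℂ))
    (W : Submodule ℂ (α → ℂ)) : Prop :=
  P ∘ₗ P = P ∧ LinearMap.range P = W ∧ ∀ ψ φ, finner (P ψ) φ = finner ψ (P φ)

/-- The gauge transformation operator `A_v(h)` (a permutation of the group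
basis). -/
def Avg (G : Type) [Group G] (L : ℕ) (v : Vtx L) (h : G) : H G L →ₗ[ℂ] H G L :=
  LinearMap.funLeft ℂ ℂ (gaugeOne v h⁻¹)

/-- The vertex projector `A_v = (1/|G|) ∑_h A_v(h)`. -/
noncomputable def Av (G : Type) [Group G] [Fintype G] (L : ℕ) (v : Vtx L) :
    H G L →ₗ[ℂ] H G L :=
  (Fintype.card G : ℂ)⁻¹ • ∑ h : G, Avg G L v h

/-- The plaquette projector `B_p`, projecting onto group-basis states whose
holonomy counterclockwise around the plaquette `p` is trivial. -/
def Bp (G : Type) [Group G] (L : ℕ) (p : Vtx L) : H G L →ₗ[ℂ] H G L :=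
  diagOpF fun x => if hol x (plaqBoundary p) = 1 then 1 else 0

/-- The ground space `V_gs` of Kitaev's quantum double model:
common fixed space of all `A_v` and all `B_p`. -/
def groundSpace (G : Type) [Group G] [Fintype G] (L : ℕ) : Submodule ℂ (H G L) :=
  (⨅ v : Vtx L, LinearMap.ker (Av G L v - LinearMap.id)) ⊓
    ⨅ p : Vtx L, LinearMap.ker (Bp G L p - LinearMap.id)

/-- The gauge-invariant (physical) subspace: common fixed space of all `A_v`. -/
def Hgauge (G : Type) [Group G] [Fintype G] (L : ℕ) : Submodule ℂ (H G L) :=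
  ⨅ v : Vtx L, LinearMap.ker (Av G L v - LinearMap.id)

/-! ### Rectangular sublattices -/

/-- The edges of the `w × h` rectangular sublattice with lower-left corner `c`
(including the edges on its boundary). -/
def rectEdges (L : ℕ) (c : Vtx L) (w h : ℕ) : Set (Edge L) :=
  { e | ∃ i j : ℕ, e.1 = c + ((i : ZMod L), (j : ZMod L)) ∧
      if e.2 then i ≤ w ∧ j < h else i < w ∧ j ≤ h }

/-- The vertices of the rectangular sublattice. -/
def rectVtx (L : ℕ) (c : Vtx L) (w h : ℕ) : Set (Vtx L) :=
  { v | ∃ i j : ℕ, i ≤ w ∧ j ≤ h ∧ v = c + ((i : ZMod L), (j : ZMod L)) }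

/-- The interior vertices of the rectangular sublattice. -/
def rectIntVtx (L : ℕ) (c : Vtx L) (w h : ℕ) : Set (Vtx L) :=
  { v | ∃ i j : ℕ, 0 < i ∧ i < w ∧ 0 < j ∧ j < h ∧
      v = c + ((i : ZMod L), (j : ZMod L)) }

/-- The boundary vertices of the rectangular sublattice. -/
def rectBdryVtx (L : ℕ) (c : Vtx L) (w h : ℕ) : Set (Vtx L) :=
  { v | ∃ i j : ℕ, i ≤ w ∧ j ≤ h ∧ (i = 0 ∨ i = w ∨ j = 0 ∨ j = h) ∧
      v = c + ((i : ZMod L), (j : ZMod L)) }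

/-- The plaquettes of the rectangular sublattice (labelled by their lower-left
corners). -/
def rectPlaqs (L : ℕ) (c : Vtx L) (w h : ℕ) : Set (Vtx L) :=
  { p | ∃ i j : ℕ, i < w ∧ j < h ∧ p = c + ((i : ZMod L), (j : ZMod L)) }

/-- The boundary edges of the rectangular sublattice. -/
def rectBdryEdges (L : ℕ) (c : Vtx L) (w h : ℕ) : Set (Edge L) :=
  { e | ∃ i j : ℕ, e.1 = c + ((i : ZMod L), (j : ZMod L)) ∧
      if e.2 then (i = 0 ∨ i = w) ∧ j < h else i < w ∧ (j = 0 ∨ j = h) }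

/-! ### Reduced states and local operators -/

/-- Combine a configuration on the edges in `A` with one on the complementary
edges. -/
def merge {S : Type} {L : ℕ} (A : Set (Edge L)) (a : {e : Edge L // e ∈ A} → S)
    (b : {e : Edge L // e ∉ A} → S) : Edge L → S :=
  fun e => if h : e ∈ A then a ⟨e, h⟩ else b ⟨e, h⟩

/-- The reduced density matrix `Tr_{Ā} |ψ⟩⟨ψ|` of a state `ψ` on the edges in
`A`. -/
noncomputable def rho {S : Type} [Fintype S] {L : ℕ} [NeZero L] (A : Set (Edge L))
    (ψ : (Edge L → S) → ℂ) :
    Matrix ({e : Edge L // e ∈ A} → S) ({e : Edge L // e ∈ A} → S) ℂ :=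
  Matrix.of fun a a' => ∑ b : {e : Edge L // e ∉ A} → S,
    ψ (merge A a b) * (starRingEnd ℂ) (ψ (merge A a' b))

/-- The partial trace over the complement of `A` of an operator. -/
noncomputable def ptraceOp {S : Type} [Fintype S] {L : ℕ} [NeZero L]
    (A : Set (Edge L)) (O : ((Edge L → S) → ℂ) →ₗ[ℂ] ((Edge L → S) → ℂ)) :
    Matrix ({e : Edge L // e ∈ A} → S) ({e : Edge L // e ∈ A} → S) ℂ :=
  Matrix.of fun a a' => ∑ b : {e : Edge L // e ∉ A} → S,
    O (deltaF (merge A a' b)) (merge A a b)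

/-- An operator is supported on the edges in `A` if its matrix in the product
basis has the form `M ⊗ 𝟙`. -/
def SupportedOn {S : Type} {L : ℕ} (A : Set (Edge L))
    (O : ((Edge L → S) → ℂ) →ₗ[ℂ] ((Edge L → S) → ℂ)) : Prop :=
  ∃ M : Matrix ({e : Edge L // e ∈ A} → S) ({e : Edge L // e ∈ A} → S) ℂ,
    ∀ (a a' : {e : Edge L // e ∈ A} → S) (b b' : {e : Edge L // e ∉ A} → S),
      O (deltaF (merge A a' b')) (merge A a b) = if b = b' then M a a' else 0

end QDM

namespace QDM

/-! ### The toric code: `G = ℤ₂` on the `L × L` periodic square lattice -/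

/-- A product of Pauli `X` operators, one on each edge where `a` is `1`. -/
def PX (L : ℕ) (a : Edge L → ZMod 2) :
    ((Edge L → ZMod 2) → ℂ) →ₗ[ℂ] ((Edge L → ZMod 2) → ℂ) :=
  LinearMap.funLeft ℂ ℂ fun x => x + a

/-- A product of Pauli `Z` operators, one on each edge where `b` is `1`. -/
def PZ (L : ℕ) [NeZero L] (b : Edge L → ZMod 2) :
    ((Edge L → ZMod 2) → ℂ) →ₗ[ℂ] ((Edge L → ZMod 2) → ℂ) :=
  diagOpF fun x => (-1 : ℂ) ^ (∑ e : Edge L, (b e * x e).val)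

/-- Indicator of the edges incident to the vertex `v` (the star of `v`), so that
`PX (vStar v)` is the toric code vertex operator `X_v`. -/
def vStar (L : ℕ) (v : Vtx L) : Edge L → ZMod 2 :=
  fun e => if src e = v ∨ tgt e = v then 1 else 0

/-- Indicator of the boundary edges of the plaquette `p`, so that
`PZ (pStar p)` is the toric code plaquette operator `Z_p`. -/
def pStar (L : ℕ) (p : Vtx L) : Edge L → ZMod 2 :=
  fun e => if e = (p, false) ∨ e = (p, true) ∨ e = (p + (1, 0), true) ∨
      e = (p + (0, 1), false) then 1 else 0

/-- The toric code ground space: the common `+1` eigenspace of all vertex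
operators `X_v` and plaquette operators `Z_p`. -/
def toricGS (L : ℕ) [NeZero L] : Submodule ℂ ((Edge L → ZMod 2) → ℂ) :=
  (⨅ v : Vtx L, LinearMap.ker (PX L (vStar L v) - LinearMap.id)) ⊓
    ⨅ p : Vtx L, LinearMap.ker (PZ L (pStar L p) - LinearMap.id)

/-- The Pauli `X`-part of an assignment `σ` of Pauli operators (`0 = X`,
`1 = Y`, `2 = Z`, `none` = identity) to edges. -/
def xSupp (L : ℕ) (σ : Edge L → Option (Fin 3)) : Edge L → ZMod 2 :=
  fun e => if σ e = some 0 ∨ σ e = some 1 then 1 else 0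

/-- The Pauli `Z`-part of an assignment `σ` of Pauli operators to edges. -/
def zSupp (L : ℕ) (σ : Edge L → Option (Fin 3)) : Edge L → ZMod 2 :=
  fun e => if σ e = some 1 ∨ σ e = some 2 then 1 else 0

/-- The tensor product of Pauli operators described by `σ` (using
`Y = i X Z`). -/
noncomputable def pauliProd (L : ℕ) [NeZero L] (σ : Edge L → Option (Fin 3)) :
    ((Edge L → ZMod 2) → ℂ) →ₗ[ℂ] ((Edge L → ZMod 2) → ℂ) :=
  (Complex.I ^ (Nat.card {e : Edge L // σ e = some 1})) •
    (PX L (xSupp L σ) ∘ₗ PZ L (zSupp L σ))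

/-- The error set `𝓔(k)`: all tensor products of Pauli operators `X, Y, Z`
acting on at most `k` edges. -/
def ErrSet (L : ℕ) [NeZero L] (k : ℕ) :
    Set (((Edge L → ZMod 2) → ℂ) →ₗ[ℂ] ((Edge L → ZMod 2) → ℂ)) :=
  { E | ∃ σ : Edge L → Option (Fin 3),
      Nat.card {e : Edge L // σ e ≠ none} ≤ k ∧ E = pauliProd L σ }

end QDM

namespace QDM

theorem zmod_sum_range (L : ℕ) [NeZero L] (u : ZMod L → ZMod 2) :
    ∑ i ∈ Finset.range L, u (i : ZMod L) = ∑ x : ZMod L, u x := by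
  refine Finset.sum_nbij' (fun i => (i : ZMod L)) (fun x => x.val) ?_ ?_ ?_ ?_ ?_
  · intro i _; exact Finset.mem_univ _
  · intro x _; exact Finset.mem_range.2 (ZMod.val_lt x)
  · intro i hi; exact ZMod.val_cast_of_lt (Finset.mem_range.1 hi)
  · intro x _; exact ZMod.natCast_zmod_val x
  · intro i _; rfl

theorem prim1 (L : ℕ) [NeZero L] (u : ZMod L → ZMod 2) (hu : ∑ x, u x = 0) :
    ∃ F : ZMod L → ZMod 2, F 0 = 0 ∧ ∀ x, F (x + 1) = F x + u x := by
  refine ⟨fun x => ∑ i ∈ Finset.range x.val, u (i : ZMod L), by simp, ?_⟩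
  intro x
  have hx : ∑ i ∈ Finset.range x.val, u (i : ZMod L) + u x
      = ∑ i ∈ Finset.range (x.val + 1), u (i : ZMod L) := by
    rw [Finset.sum_range_succ, ZMod.natCast_zmod_val]
  have hx1 : x + 1 = ((x.val + 1 : ℕ) : ZMod L) := by
    push_cast; rw [ZMod.natCast_zmod_val]
  show ∑ i ∈ Finset.range (x + 1).val, u (i : ZMod L) = _
  rw [hx]
  rcases Nat.lt_or_ge (x.val + 1) L with h | h
  · rw [hx1, ZMod.val_cast_of_lt h]
  · have h' : x.val + 1 = L := le_antisymm (ZMod.val_lt x) h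
    rw [hx1, h', zmod_sum_range, hu]; simp

theorem z2 (a b : ZMod 2) (h : a + b = 0) : a = b := by
  revert a b; decide

theorem const_of_step (L : ℕ) [NeZero L] {β : Type} (R : ZMod L → β)
    (h : ∀ y, R (y + 1) = R y) (y : ZMod L) : R y = R 0 := by
  have : ∀ n : ℕ, R (n : ZMod L) = R 0 := by
    intro n
    induction n with
    | zero => simp
    | succ n ih => push_cast; rw [h, ih]
  rw [← ZMod.natCast_zmod_val y]; exact this _

/-- A closed cochain vanishing on a row and on a column is exact. -/
theorem exact_of_closed (L : ℕ) [NeZero L] (h v : ZMod L → ZMod L → ZMod 2)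
    (hc : ∀ x y, h x y + v x y + v (x + 1) y + h x (y + 1) = 0)
    (y0 : ZMod L) (hy0 : ∀ x, h x y0 = 0) (x0 : ZMod L) (hx0 : ∀ y, v x0 y = 0) :
    ∃ f : ZMod L → ZMod L → ZMod 2,
      (∀ x y, h x y = f x y + f (x + 1) y) ∧ ∀ x y, v x y = f x y + f x (y + 1) := by
  have hR : ∀ y, ∑ x, h x y = 0 := by
    have step : ∀ y, ∑ x, h x (y + 1) = ∑ x, h x y := by
      intro y
      have e : ∑ x, v (x + 1) y = ∑ x, v x y :=
        Equiv.sum_comp (Equiv.addRight (1 : ZMod L)) (fun x => v x y)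
      have := Finset.sum_congr rfl (fun x (_ : x ∈ Finset.univ) => hc x y)
      simp only [Finset.sum_add_distrib, Finset.sum_const_zero, e] at this
      revert this
      generalize ∑ x, h x y = a
      generalize ∑ x, v x y = b
      generalize ∑ x, h x (y+1) = c
      revert a b c; decide
    intro y
    rw [const_of_step L (fun y => ∑ x, h x y) step y,
      ← const_of_step L (fun y => ∑ x, h x y) step y0]
    simp [hy0]
  have hC : ∀ x, ∑ y, v x y = 0 := by
    have step : ∀ x, ∑ y, v (x + 1) y = ∑ y, v x y := by
      intro x
      have e : ∑ y, h x (y + 1) = ∑ y, h x y :=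
        Equiv.sum_comp (Equiv.addRight (1 : ZMod L)) (fun y => h x y)
      have := Finset.sum_congr rfl (fun y (_ : y ∈ Finset.univ) => hc x y)
      simp only [Finset.sum_add_distrib, Finset.sum_const_zero, e] at this
      revert this
      generalize ∑ y, h x y = a
      generalize ∑ y, v x y = b
      generalize ∑ y, v (x+1) y = c
      revert a b c; decide
    intro x
    rw [const_of_step L (fun x => ∑ y, v x y) step x,
      ← const_of_step L (fun x => ∑ y, v x y) step x0]
    simp [hx0]
  obtain ⟨F, hF0, hF⟩ := prim1 L (fun x => h x 0) (hR 0)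
  choose K hK0 hK using fun x => prim1 L (fun y => v x y) (hC x)
  refine ⟨fun x y => F x + K x y, ?_, ?_⟩
  · intro x y
    have step : ∀ y, h x (y + 1) + (F x + K x (y + 1) + (F (x + 1) + K (x + 1) (y + 1)))
        = h x y + (F x + K x y + (F (x + 1) + K (x + 1) y)) := by
      intro y
      rw [hK, hK]
      have := hc x y
      revert this
      generalize h x y = a
      generalize h x (y+1) = b
      generalize v x y = c
      generalize v (x+1) y = d
      generalize F x = p
      generalize F (x+1) = q
      generalize K x y = r
      generalize K (x+1) y = s
      intro this
      have : b = a + c + d := (z2 _ _ this).symm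
      subst this
      have hd : d + d = 0 := CharTwo.add_self_eq_zero d
      have hcc : c + c = 0 := CharTwo.add_self_eq_zero c
      linear_combination hd + hcc
    apply z2
    have := const_of_step L
      (fun y => h x y + (F x + K x y + (F (x + 1) + K (x + 1) y))) step y
    refine this.trans ?_
    simp only [hK0, hF, add_zero]
    generalize F x = a
    generalize h x 0 = b
    revert a b; decide
  · intro x y
    simp only [hK]
    generalize F x = a
    generalize K x y = b
    generalize v x y = c
    revert a b c; decide

theorem exists_avoid (L : ℕ) [NeZero L] (S : Finset (Edge L)) (hS : S.card < L)
    (π : Edge L → ZMod L) : ∃ y, ∀ e, π e = y → e ∉ S := by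
  by_contra! hcon
  have : (Finset.univ : Finset (ZMod L)) ⊆ S.image π := by
    intro y _
    obtain ⟨e, he, heS⟩ := hcon y
    exact Finset.mem_image.2 ⟨e, heS, he⟩
  have h1 := Finset.card_le_card this
  have h2 : (S.image π).card ≤ S.card := Finset.card_image_le
  rw [Finset.card_univ, ZMod.card] at h1
  omega

/-- pairing -/
def dot (L : ℕ) [NeZero L] (b x : Edge L → ZMod 2) : ZMod 2 := ∑ e, b e * x e

theorem one_ne (L : ℕ) (hL : 1 < L) : (1 : ZMod L) ≠ 0 := by
  have : Fact (1 < L) := ⟨hL⟩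
  exact one_ne_zero

theorem pStar_eq (L : ℕ) (hL : 1 < L) (p : Vtx L) (e : Edge L) :
    pStar L p e = (if e = (p, false) then 1 else 0) + (if e = (p, true) then 1 else 0)
      + (if e = (p + (1, 0), true) then 1 else 0)
      + (if e = (p + (0, 1), false) then 1 else 0) := by
  have h1 := one_ne L hL
  obtain ⟨x, y⟩ := p
  obtain ⟨⟨x', y'⟩, d⟩ := e
  simp only [pStar, Prod.mk_add_mk, add_zero, Prod.mk.injEq]
  cases d <;> by_cases hx : x' = x <;> by_cases hy : y' = y <;> simp [hx, hy, h1]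

theorem vStar_eq (L : ℕ) (hL : 1 < L) (v : Vtx L) (e : Edge L) :
    vStar L v e = (if src e = v then 1 else 0) + (if tgt e = v then 1 else 0) := by
  have h1 := one_ne L hL
  obtain ⟨x, y⟩ := v
  obtain ⟨⟨x', y'⟩, d⟩ := e
  simp only [vStar, src, tgt]
  cases d <;> by_cases hx : x' = x <;> by_cases hy : y' = y <;> simp [hx, hy, h1]

theorem vStar_eq' (L : ℕ) (hL : 1 < L) (v : Vtx L) (e : Edge L) :
    vStar L v e = (if e = (v, false) then 1 else 0) + (if e = (v, true) then 1 else 0)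
      + (if e = (v - (1, 0), false) then 1 else 0)
      + (if e = (v - (0, 1), true) then 1 else 0) := by
  rw [vStar_eq L hL]
  obtain ⟨x, y⟩ := v
  obtain ⟨⟨x', y'⟩, d⟩ := e
  simp only [src, tgt]
  cases d <;> simp [eq_sub_iff_add_eq]

theorem dot_pStar (L : ℕ) [NeZero L] (hL : 1 < L) (a : Edge L → ZMod 2) (p : Vtx L) :
    dot L (pStar L p) a = a (p, false) + a (p, true) + a (p + (1, 0), true)
      + a (p + (0, 1), false) := by
  simp [dot, pStar_eq L hL, add_mul, Finset.sum_add_distrib]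

theorem dot_vStar (L : ℕ) [NeZero L] (hL : 1 < L) (a : Edge L → ZMod 2) (v : Vtx L) :
    dot L a (vStar L v) = a (v, false) + a (v, true) + a (v - (1, 0), false)
      + a (v - (0, 1), true) := by
  simp [dot, vStar_eq' L hL, mul_add, Finset.sum_add_distrib]

theorem exact_X (L : ℕ) [NeZero L] (hL : 1 < L) (S : Finset (Edge L)) (hS : S.card < L)
    (a : Edge L → ZMod 2) (ha : ∀ e, e ∉ S → a e = 0)
    (hc : ∀ p, dot L (pStar L p) a = 0) :
    ∃ f : Vtx L → ZMod 2, a = ∑ v, f v • vStar L v := by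
  obtain ⟨y0, hy0⟩ := exists_avoid L S hS (fun e => e.1.2)
  obtain ⟨x0, hx0⟩ := exists_avoid L S hS (fun e => e.1.1)
  obtain ⟨f, hf1, hf2⟩ := exact_of_closed L (fun x y => a ((x, y), false))
    (fun x y => a ((x, y), true)) (by
      intro x y
      have := hc (x, y)
      rw [dot_pStar L hL] at this
      simpa using this) y0 (fun x => ha _ (hy0 _ rfl)) x0 (fun y => ha _ (hx0 _ rfl))
  refine ⟨fun v => f v.1 v.2, ?_⟩
  funext e
  have : (∑ v, f v.1 v.2 • vStar L v) e = f (src e).1 (src e).2 + f (tgt e).1 (tgt e).2 := by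
    simp [Finset.sum_apply, vStar_eq L hL, mul_add, Finset.sum_add_distrib]
  rw [this]
  obtain ⟨⟨x, y⟩, d⟩ := e
  cases d
  · simpa [src, tgt] using hf1 x y
  · simpa [src, tgt] using hf2 x y

theorem exact_Z (L : ℕ) [NeZero L] (hL : 1 < L) (S : Finset (Edge L)) (hS : S.card < L)
    (b : Edge L → ZMod 2) (hb : ∀ e, e ∉ S → b e = 0)
    (hc : ∀ v, dot L b (vStar L v) = 0) :
    ∃ g : Vtx L → ZMod 2, b = ∑ p, g p • pStar L p := by
  obtain ⟨y0, hy0⟩ := exists_avoid L S hS (fun e => e.1.2)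
  obtain ⟨x0, hx0⟩ := exists_avoid L S hS (fun e => e.1.1)
  obtain ⟨f, hf1, hf2⟩ := exact_of_closed L (fun x y => b ((x + 1, y), true))
    (fun x y => b ((x, y + 1), false)) (by
      intro x y
      have := hc (x + 1, y + 1)
      rw [dot_vStar L hL] at this
      simp only [Prod.mk_sub_mk, add_sub_cancel_right, sub_zero] at this
      linear_combination this) y0 (fun x => hb _ (hy0 _ rfl)) x0 (fun y => hb _ (hx0 _ rfl))
  refine ⟨fun v => f v.1 v.2, ?_⟩
  funext e
  obtain ⟨⟨x, y⟩, d⟩ := e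
  have key : ∀ p : Vtx L, pStar L p ((x, y), d) =
      (if p = (x, y) then 1 else 0) +
        (if p = (if d then (x - 1, y) else (x, y - 1)) then 1 else 0) := by
    intro p
    rw [pStar_eq L hL]
    obtain ⟨x', y'⟩ := p
    cases d <;> simp [eq_sub_iff_add_eq, eq_comm]
  have : (∑ p, f p.1 p.2 • pStar L p) ((x, y), d) = f x y +
      f (if d then (x - 1, y) else (x, y - 1)).1 (if d then (x - 1, y) else (x, y - 1)).2 := by
    simp [Finset.sum_apply, key, mul_add, Finset.sum_add_distrib]
  rw [this]
  cases d
  · have := hf2 x (y - 1)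
    simp only [sub_add_cancel] at this
    simpa [add_comm] using this
  · have := hf1 (x - 1) y
    simp only [sub_add_cancel] at this
    simpa [add_comm] using this

/-- sign character -/
def chi (t : ZMod 2) : ℂ := (-1 : ℂ) ^ t.val

theorem chi_add (s t : ZMod 2) : chi (s + t) = chi s * chi t := by
  unfold chi
  rw [ZMod.val_add, ← pow_add]
  exact (neg_one_pow_eq_pow_mod_two _).symm

theorem chi_zero : chi 0 = 1 := by simp [chi]

theorem chi_one : chi 1 = -1 := by simp [chi, ZMod.val_one]

theorem chi_conj (t : ZMod 2) : (starRingEnd ℂ) (chi t) = chi t := by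
  simp [chi]

theorem chi_sum {ι : Type} (s : Finset ι) (f : ι → ZMod 2) :
    (-1 : ℂ) ^ (∑ i ∈ s, (f i).val) = chi (∑ i ∈ s, f i) := by
  induction s using Finset.induction_on with
  | empty => simp [chi]
  | insert i s hi ih =>
    rw [Finset.sum_insert hi, Finset.sum_insert hi, pow_add, ih, chi_add]; rfl

theorem PX_apply (L : ℕ) (a : Edge L → ZMod 2) (ψ : (Edge L → ZMod 2) → ℂ) (x) :
    PX L a ψ x = ψ (x + a) := rfl

theorem PZ_apply (L : ℕ) [NeZero L] (b : Edge L → ZMod 2) (ψ : (Edge L → ZMod 2) → ℂ) (x) :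
    PZ L b ψ x = chi (dot L b x) * ψ x := by
  show (-1 : ℂ) ^ _ * ψ x = _
  rw [chi_sum]; rfl

theorem dot_add_right (L : ℕ) [NeZero L] (b x y : Edge L → ZMod 2) :
    dot L b (x + y) = dot L b x + dot L b y := by
  simp [dot, mul_add, Finset.sum_add_distrib]

theorem dot_add_left (L : ℕ) [NeZero L] (b c x : Edge L → ZMod 2) :
    dot L (b + c) x = dot L b x + dot L c x := by
  simp [dot, add_mul, Finset.sum_add_distrib]

theorem mem_GS (L : ℕ) [NeZero L] (ψ : (Edge L → ZMod 2) → ℂ) :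
    ψ ∈ toricGS L ↔ (∀ v, PX L (vStar L v) ψ = ψ) ∧ ∀ p, PZ L (pStar L p) ψ = ψ := by
  simp [toricGS, Submodule.mem_inf, Submodule.mem_iInf, LinearMap.mem_ker, sub_eq_zero]

theorem cfg_add_self (L : ℕ) (a : Edge L → ZMod 2) : a + a = 0 := by
  funext e; exact CharTwo.add_self_eq_zero (a e)

theorem PX_span (L : ℕ) [NeZero L] (ψ : (Edge L → ZMod 2) → ℂ)
    (h : ∀ v, PX L (vStar L v) ψ = ψ) (f : Vtx L → ZMod 2) :
    PX L (∑ v, f v • vStar L v) ψ = ψ := by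
  induction (Finset.univ : Finset (Vtx L)) using Finset.induction_on with
  | empty => funext x; simp [PX_apply]
  | insert v s hv ih =>
    rw [Finset.sum_insert hv]
    funext x
    rw [PX_apply, ← add_assoc]
    have e1 := congrFun ih (x + f v • vStar L v)
    rw [PX_apply] at e1
    rw [e1]
    have h01 : ∀ t : ZMod 2, t = 0 ∨ t = 1 := by decide
    rcases h01 (f v) with h0 | h0
    · simp [h0]
    · rw [h0, one_smul]; exact congrFun (h v) x

theorem PZ_span (L : ℕ) [NeZero L] (ψ : (Edge L → ZMod 2) → ℂ)
    (h : ∀ v, PZ L (pStar L v) ψ = ψ) (f : Vtx L → ZMod 2) :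
    PZ L (∑ v, f v • pStar L v) ψ = ψ := by
  induction (Finset.univ : Finset (Vtx L)) using Finset.induction_on with
  | empty => funext x; simp [PZ_apply, dot, chi_zero]
  | insert v s hv ih =>
    rw [Finset.sum_insert hv]
    funext x
    rw [PZ_apply, dot_add_left, chi_add, mul_assoc]
    have e1 := congrFun ih x
    rw [PZ_apply] at e1
    rw [e1]
    have h01 : ∀ t : ZMod 2, t = 0 ∨ t = 1 := by decide
    rcases h01 (f v) with h0 | h0
    · simp [h0, dot, chi_zero]
    · rw [h0, one_smul]
      have := congrFun (h v) x
      rwa [PZ_apply] at this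

theorem adjOp_comp {α : Type} [Fintype α] (A B : (α → ℂ) →ₗ[ℂ] (α → ℂ)) :
    adjOp (A ∘ₗ B) = adjOp B ∘ₗ adjOp A := by
  simp [adjOp, LinearMap.toMatrix'_comp, Matrix.conjTranspose_mul, Matrix.toLin'_mul]

theorem adjOp_adjOp {α : Type} [Fintype α] (A : (α → ℂ) →ₗ[ℂ] (α → ℂ)) :
    adjOp (adjOp A) = A := by
  simp [adjOp]

theorem adjOp_smul {α : Type} [Fintype α] (c : ℂ) (A : (α → ℂ) →ₗ[ℂ] (α → ℂ)) :
    adjOp (c • A) = (starRingEnd ℂ c) • adjOp A := by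
  simp [adjOp, Matrix.conjTranspose_smul]

theorem adjOp_eq {α : Type} [Fintype α] (A B : (α → ℂ) →ₗ[ℂ] (α → ℂ))
    (h : ∀ i j, (starRingEnd ℂ) (A (Pi.single i 1) j) = B (Pi.single j 1) i) :
    adjOp A = B := by
  unfold adjOp
  apply LinearMap.toMatrix'.injective
  rw [LinearMap.toMatrix'_toLin']
  ext i j
  rw [Matrix.conjTranspose_apply, LinearMap.toMatrix'_apply, LinearMap.toMatrix'_apply]
  convert h i j
  rfl

theorem adjOp_PX (L : ℕ) [NeZero L] (a : Edge L → ZMod 2) : adjOp (PX L a) = PX L a := by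
  apply adjOp_eq
  intro i j
  have e : j + a = i ↔ i + a = j := by
    constructor <;> (rintro rfl; rw [add_assoc, cfg_add_self, add_zero])
  simp only [PX_apply, Pi.single_apply, e]
  split_ifs <;> simp

theorem adjOp_PZ (L : ℕ) [NeZero L] (a : Edge L → ZMod 2) : adjOp (PZ L a) = PZ L a := by
  apply adjOp_eq
  intro i j
  simp only [PZ_apply, Pi.single_apply, map_mul, chi_conj]
  by_cases h : i = j
  · subst h; simp
  · have h' : ¬ j = i := fun h' => h h'.symm
    simp [h, h']

theorem adjOp_proj {α : Type} [Fintype α] (P : (α → ℂ) →ₗ[ℂ] (α → ℂ))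
    (h : ∀ ψ φ, finner (P ψ) φ = finner ψ (P φ)) : adjOp P = P := by
  apply adjOp_eq
  intro i j
  have := h (Pi.single i 1) (Pi.single j 1)
  simpa [finner, Pi.single_apply] using this

theorem form_T (L : ℕ) [NeZero L] (σ τ : Edge L → Option (Fin 3)) :
    ∃ c : ℂ, ∀ ψ x, (adjOp (pauliProd L σ) ∘ₗ pauliProd L τ) ψ x =
      c * (chi (dot L (zSupp L σ + zSupp L τ) x) * ψ (x + (xSupp L σ + xSupp L τ))) := by
  refine ⟨(starRingEnd ℂ) (Complex.I ^ (Nat.card {e : Edge L // σ e = some 1})) *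
    Complex.I ^ (Nat.card {e : Edge L // τ e = some 1}) *
    chi (dot L (zSupp L τ) (xSupp L σ + xSupp L τ)), ?_⟩
  intro ψ x
  simp only [pauliProd, adjOp_smul, adjOp_comp, adjOp_PX, adjOp_PZ, LinearMap.comp_apply,
    LinearMap.smul_apply, Pi.smul_apply, PX_apply, PZ_apply, smul_eq_mul, map_smul,
    dot_add_left, dot_add_right, chi_add, add_assoc]
  ring

theorem zero_case {α : Type} [Fintype α] (P S T : (α → ℂ) →ₗ[ℂ] (α → ℂ))
    (hP : adjOp P = P) (hS : adjOp S = S) (hSP : S ∘ₗ P = P)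
    (hST : ∀ ψ, S (T ψ) = - T (S ψ)) : P ∘ₗ T ∘ₗ P = 0 := by
  have hPS : P ∘ₗ S = P := by
    have := congrArg adjOp hSP
    rwa [adjOp_comp, hP, hS] at this
  refine LinearMap.ext fun ψ => ?_
  have h1 : P (S (T (P ψ))) = P (T (P ψ)) := LinearMap.congr_fun hPS _
  have h2 : S (P ψ) = P ψ := LinearMap.congr_fun hSP _
  rw [hST, h2, map_neg] at h1
  show P (T (P ψ)) = 0
  exact self_eq_neg.1 h1.symm

theorem either (L : ℕ) [NeZero L] (k : ℕ) (hk : k ≤ (L - 1) / 2)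
    (P : ((Edge L → ZMod 2) → ℂ) →ₗ[ℂ] ((Edge L → ZMod 2) → ℂ))
    (hP : IsOrthProjOnto P (toricGS L)) :
    ∀ E₁ ∈ ErrSet L k, ∀ E₂ ∈ ErrSet L k,
      P ∘ₗ (adjOp E₁ ∘ₗ E₂) ∘ₗ P = 0 ∨
        ∃ c : ℂ, ∀ ψ ∈ toricGS L, (adjOp E₁ ∘ₗ E₂) ψ = c • ψ := by
  rintro _ ⟨σ, hσ, rfl⟩ _ ⟨τ, hτ, rfl⟩
  obtain ⟨-, hPr, hPs⟩ := hP
  have hPa := adjOp_proj P hPs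
  have hPm : ∀ ψ, P ψ ∈ toricGS L := fun ψ => hPr ▸ LinearMap.mem_range_self P ψ
  obtain ⟨c, hT⟩ := form_T L σ τ
  generalize hTT : adjOp (pauliProd L σ) ∘ₗ pauliProd L τ = T at hT ⊢
  set a := xSupp L σ + xSupp L τ with hadef
  set b := zSupp L σ + zSupp L τ with hbdef
  let S : Finset (Edge L) := Finset.univ.filter (fun e => σ e ≠ none) ∪
    Finset.univ.filter (fun e => τ e ≠ none)
  have hS : S.card < L := by
    have h1 : S.card ≤ _ := Finset.card_union_le _ _
    rw [Nat.card_eq_fintype_card, Fintype.card_subtype] at hσ hτ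
    have := NeZero.pos L
    omega
  have hS' : ∀ e, e ∉ S → σ e = none ∧ τ e = none := by
    intro e he
    simpa [S] using he
  have ha : ∀ e, e ∉ S → a e = 0 := by
    intro e he
    obtain ⟨h1, h2⟩ := hS' e he
    simp [hadef, xSupp, h1, h2]
  have hb : ∀ e, e ∉ S → b e = 0 := by
    intro e he
    obtain ⟨h1, h2⟩ := hS' e he
    simp [hbdef, zSupp, h1, h2]
  have h01 : ∀ t : ZMod 2, t ≠ 0 → t = 1 := by decide
  by_cases hz : ∃ v, dot L b (vStar L v) ≠ 0
  · left
    obtain ⟨v, hv⟩ := hz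
    refine zero_case P (PX L (vStar L v)) T hPa (adjOp_PX L _) ?_ ?_
    · refine LinearMap.ext fun ψ => ?_; exact ((mem_GS L _).1 (hPm ψ)).1 v
    · intro ψ
      funext x
      rw [PX_apply, hT, Pi.neg_apply, hT, PX_apply, dot_add_right, chi_add, h01 _ hv, chi_one,
        add_right_comm]
      ring
  by_cases hx : ∃ p, dot L (pStar L p) a ≠ 0
  · left
    obtain ⟨p, hp⟩ := hx
    refine zero_case P (PZ L (pStar L p)) T hPa (adjOp_PZ L _) ?_ ?_
    · refine LinearMap.ext fun ψ => ?_; exact ((mem_GS L _).1 (hPm ψ)).2 p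
    · intro ψ
      funext x
      rw [PZ_apply, hT, Pi.neg_apply, hT, PZ_apply, dot_add_right, chi_add, h01 _ hp, chi_one]
      ring
  push Not at hz hx
  right
  refine ⟨c, fun ψ hψ => ?_⟩
  obtain ⟨hψ1, hψ2⟩ := (mem_GS L ψ).1 hψ
  have hab : (∃ f : Vtx L → ZMod 2, a = ∑ v, f v • vStar L v) ∧
      ∃ g : Vtx L → ZMod 2, b = ∑ p, g p • pStar L p := by
    rcases Nat.lt_or_ge 1 L with hL | hL
    · exact ⟨exact_X L hL S hS a ha hx, exact_Z L hL S hS b hb hz⟩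
    · have h0 : S = ∅ := Finset.card_eq_zero.1 (by omega)
      refine ⟨⟨0, ?_⟩, ⟨0, ?_⟩⟩
      · funext e; simp [ha e (by simp [h0])]
      · funext e; simp [hb e (by simp [h0])]
  obtain ⟨⟨f, hf⟩, ⟨g, hg⟩⟩ := hab
  have e1 := PX_span L ψ hψ1 f
  have e2 := PZ_span L ψ hψ2 g
  rw [← hf] at e1
  rw [← hg] at e2
  funext x
  have e1 := congrFun e1 x
  have e2 := congrFun e2 x
  rw [PX_apply] at e1
  rw [PZ_apply] at e2
  rw [hT, e1, e2]; rfl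

/-- **The toric code corrects all errors on at most `⌊(L−1)/2⌋` qubits.**
Let `P` be the orthogonal projector onto the toric code ground space and let
`k ≤ ⌊(L−1)/2⌋`.  Then for all `E₁, E₂ ∈ 𝓔(k)`, either `P E₁† E₂ P = 0` or
`E₁† E₂` acts on the ground space as a scalar; consequently the Knill–Laflamme
condition `P Eᵢ† Eⱼ P = αᵢⱼ • P` holds with `(αᵢⱼ)` a Hermitian matrix, for any
family of errors from `𝓔(k)`. -/
theorem toric_code_is_QECC (L : ℕ) [NeZero L] (k : ℕ) (hk : k ≤ (L - 1) / 2)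
    (P : ((Edge L → ZMod 2) → ℂ) →ₗ[ℂ] ((Edge L → ZMod 2) → ℂ))
    (hP : IsOrthProjOnto P (toricGS L)) :
    (∀ E₁ ∈ ErrSet L k, ∀ E₂ ∈ ErrSet L k,
      P ∘ₗ (adjOp E₁ ∘ₗ E₂) ∘ₗ P = 0 ∨
        ∃ c : ℂ, ∀ ψ ∈ toricGS L, (adjOp E₁ ∘ₗ E₂) ψ = c • ψ) ∧
    ∀ (n : ℕ) (E : Fin n → (((Edge L → ZMod 2) → ℂ) →ₗ[ℂ] ((Edge L → ZMod 2) → ℂ))),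
      (∀ i, E i ∈ ErrSet L k) →
      ∃ M : Matrix (Fin n) (Fin n) ℂ, M.IsHermitian ∧
        ∀ i j, P ∘ₗ (adjOp (E i) ∘ₗ E j) ∘ₗ P = M i j • P := by
  have hE := either L k hk P hP
  refine ⟨hE, ?_⟩
  intro n E hEm
  have hPa := adjOp_proj P hP.2.2
  have hex : ∀ i j, ∃ c : ℂ, P ∘ₗ (adjOp (E i) ∘ₗ E j) ∘ₗ P = c • P := by
    intro i j
    rcases hE _ (hEm i) _ (hEm j) with h | ⟨c, h⟩
    · exact ⟨0, by rw [h, zero_smul]⟩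
    · refine ⟨c, ?_⟩
      refine LinearMap.ext fun ψ => ?_
      have hm : P ψ ∈ toricGS L := hP.2.1 ▸ LinearMap.mem_range_self P ψ
      have hPP : P (P ψ) = P ψ := LinearMap.congr_fun hP.1 ψ
      have h' := congrArg P (h _ hm)
      rw [map_smul, hPP] at h'
      exact h'
  by_cases hP0 : P = 0
  · refine ⟨0, Matrix.isHermitian_zero, ?_⟩
    intro i j
    simp [hP0]
  · choose M hM using hex
    refine ⟨Matrix.of M, ?_, hM⟩
    ext i j
    rw [Matrix.conjTranspose_apply, Matrix.of_apply, Matrix.of_apply]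
    have h1 := congrArg adjOp (hM j i)
    rw [adjOp_smul, adjOp_comp, adjOp_comp, adjOp_comp, adjOp_adjOp, hPa, LinearMap.comp_assoc,
      hM i j] at h1
    exact (smul_left_injective ℂ hP0 h1).symm

end QDM
end
end

section
/- Let A be a rectangular sublattice of Λ contained in a contractible subregion. If |g_A⟩ and |g'_A⟩ are two assignments of group elements to the edges of A such that every closed loop contained in A has trivial holonomy in both assignments, and the two assignments agree on all boundary edges of A, then there exists a (unique) product U_int of gauge transformations A_v(h_v) at vertices v strictly in the interior of A such that U_int |g_A⟩ = |g'_A⟩. -/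
/-!
Kitaev's quantum double model, formalized on the concrete `L × L` periodic square
lattice on the torus (the setting of Bravyi–Hastings–Michalakis TQO conditions used
in the paper).  Vertices are `ZMod L × ZMod L`; an oriented edge is a pair
`(v, d)` of its base vertex `v` and a direction `d : Bool` (`false` = rightward,
`true` = upward).  Each edge carries `ℂ[G]`, so the total Hilbert space is
`(Edge L → G) → ℂ` with the "group basis" given by delta functions.
"Contained in a contractible subregion" is rendered as the rectangle having side
lengths `< L`, i.e. not wrapping around the torus.
-/

open scoped BigOperators Classical

noncomputable section

namespace QDM

/-- Corner-based holonomy in coordinates. -/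
def cornerHol {G : Type} [Group G] (X Y : ℕ → ℕ → G) (i : ℕ) : ℕ → G
  | 0 => ((List.range i).map fun a => X a 0).prod
  | j + 1 => cornerHol X Y i j * Y i j

theorem cornerHol_horiz {G : Type} [Group G] (X Y : ℕ → ℕ → G) (w h : ℕ)
    (hp : ∀ i j, i < w → j < h → X i j * Y (i + 1) j = Y i j * X i (j + 1))
    (i j : ℕ) (hi : i < w) (hj : j ≤ h) :
    cornerHol X Y i j * X i j = cornerHol X Y (i + 1) j := by
  induction j with
  | zero => simp [cornerHol, List.range_succ]
  | succ j ih =>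
    simp only [cornerHol]
    rw [← ih (by omega), mul_assoc, mul_assoc, hp i j hi (by omega)]

theorem cornerHol_bdry {G : Type} [Group G] (X Y X' Y' : ℕ → ℕ → G) (w h : ℕ)
    (hp : ∀ i j, i < w → j < h → X i j * Y (i + 1) j = Y i j * X i (j + 1))
    (hp' : ∀ i j, i < w → j < h → X' i j * Y' (i + 1) j = Y' i j * X' i (j + 1))
    (h1 : ∀ i, i < w → X i 0 = X' i 0) (h2 : ∀ i, i < w → X i h = X' i h)
    (h3 : ∀ j, j < h → Y 0 j = Y' 0 j) (h4 : ∀ j, j < h → Y w j = Y' w j)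
    (i j : ℕ) (hi : i ≤ w) (hj : j ≤ h) (hb : i = 0 ∨ i = w ∨ j = 0 ∨ j = h) :
    cornerHol X Y i j = cornerHol X' Y' i j := by
  have bot : ∀ i, i ≤ w → cornerHol X Y i 0 = cornerHol X' Y' i 0 := by
    intro i hi
    simp only [cornerHol]
    congr 1
    apply List.map_congr_left
    intro a ha
    exact h1 a (by have := List.mem_range.1 ha; omega)
  have left : ∀ j, j ≤ h → cornerHol X Y 0 j = cornerHol X' Y' 0 j := by
    intro j
    induction j with
    | zero => intro _; exact bot 0 (by omega)
    | succ j ih => intro hj; simp only [cornerHol]; rw [ih (by omega), h3 j (by omega)]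
  have right : ∀ j, j ≤ h → cornerHol X Y w j = cornerHol X' Y' w j := by
    intro j
    induction j with
    | zero => intro _; exact bot w le_rfl
    | succ j ih => intro hj; simp only [cornerHol]; rw [ih (by omega), h4 j (by omega)]
  have top : ∀ i, i ≤ w → cornerHol X Y i h = cornerHol X' Y' i h := by
    intro i
    induction i with
    | zero => intro _; exact left h le_rfl
    | succ i ih =>
      intro hi
      rw [← cornerHol_horiz X Y w h hp i h hi le_rfl,
        ← cornerHol_horiz X' Y' w h hp' i h hi le_rfl, ih (by omega), h2 i hi]
  rcases hb with rfl | rfl | rfl | rfl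
  · exact left j hj
  · exact right j hj
  · exact bot i hi
  · exact top i hi

theorem coord_inj {L : ℕ} [NeZero L] (c : Vtx L) {i j a b : ℕ} (hi : i < L) (hj : j < L)
    (ha : a < L) (hb : b < L)
    (heq : c + ((i : ZMod L), (j : ZMod L)) = c + ((a : ZMod L), (b : ZMod L))) :
    i = a ∧ j = b := by
  have h0 := add_left_cancel heq
  rw [Prod.mk.injEq] at h0
  have h1 := congrArg ZMod.val h0.1
  have h2 := congrArg ZMod.val h0.2
  rw [ZMod.val_natCast_of_lt hi, ZMod.val_natCast_of_lt ha] at h1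
  rw [ZMod.val_natCast_of_lt hj, ZMod.val_natCast_of_lt hb] at h2
  exact ⟨h1, h2⟩

theorem add_right_coord {L : ℕ} (c : Vtx L) (i j : ℕ) :
    c + ((i : ZMod L), (j : ZMod L)) + (1, 0) = c + (((i + 1 : ℕ) : ZMod L), (j : ZMod L)) := by
  ext <;> simp [add_assoc]

theorem add_up_coord {L : ℕ} (c : Vtx L) (i j : ℕ) :
    c + ((i : ZMod L), (j : ZMod L)) + (0, 1) = c + ((i : ZMod L), ((j + 1 : ℕ) : ZMod L)) := by
  ext <;> simp [add_assoc]

theorem plaq_isLoop {L : ℕ} (p : Vtx L) : IsLoop (plaqBoundary p) := by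
  refine ⟨by simp [plaqBoundary], ?_, ?_⟩
  · simp [plaqBoundary, stepStart, stepEnd, src, tgt, List.Chain', add_assoc]
  · simp [plaqBoundary, stepStart, stepEnd, src, tgt]

theorem plaq_mem {L : ℕ} (c : Vtx L) (w h i j : ℕ) (hi : i < w) (hj : j < h) :
    ∀ s ∈ plaqBoundary (c + ((i : ZMod L), (j : ZMod L))), s.1 ∈ rectEdges L c w h := by
  intro s hs
  simp only [plaqBoundary, List.mem_cons, List.not_mem_nil, or_false, add_right_coord,
    add_up_coord] at hs
  rcases hs with rfl | rfl | rfl | rfl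
  · exact ⟨i, j, rfl, by simp; omega⟩
  · exact ⟨i + 1, j, rfl, by simp; omega⟩
  · exact ⟨i, j + 1, rfl, by simp; omega⟩
  · exact ⟨i, j, rfl, by simp; omega⟩

theorem plaq_flat {G : Type} [Group G] {L : ℕ} (c : Vtx L) (i j : ℕ) (x : Config G L)
    (hx : hol x (plaqBoundary (c + ((i : ZMod L), (j : ZMod L)))) = 1) :
    x (c + ((i : ZMod L), (j : ZMod L)), false) *
      x (c + (((i + 1 : ℕ) : ZMod L), (j : ZMod L)), true) =
    x (c + ((i : ZMod L), (j : ZMod L)), true) *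
      x (c + ((i : ZMod L), ((j + 1 : ℕ) : ZMod L)), false) := by
  simp only [plaqBoundary, add_right_coord, add_up_coord, hol, List.map_cons, List.map_nil,
    List.prod_cons, List.prod_nil, if_true, Bool.false_eq_true, if_false, mul_one] at hx
  rw [← mul_assoc, ← mul_inv_rev, mul_inv_eq_one] at hx
  exact hx

/-- **Interior gauge transformations.**  Let `A` be a `w × h` rectangular
sublattice contained in a contractible subregion (rendered as `w < L`,
`h < L`).  If two configurations `x, x'` both have trivial holonomy along every
closed loop contained in the edges of `A`, and they agree on all boundary edges
of `A`, then there is a unique product `U_int` of gauge transformations at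
vertices strictly in the interior of `A` — i.e. a unique `f : V → G` supported
on the interior vertices of `A` — transforming `x` into `x'` on the edges
of `A`. -/
theorem interior_gauge_transformation_exists_unique
    (G : Type) [Group G] (L : ℕ) [NeZero L] (c : Vtx L) (w h : ℕ)
    (hw : w < L) (hh : h < L) (x x' : Config G L)
    (htriv : ∀ γ : List (Step L), IsLoop γ → (∀ s ∈ γ, s.1 ∈ rectEdges L c w h) →
      hol x γ = 1 ∧ hol x' γ = 1)
    (hbdry : ∀ e ∈ rectBdryEdges L c w h, x e = x' e) :
    ∃! f : Vtx L → G, (∀ v : Vtx L, v ∉ rectIntVtx L c w h → f v = 1) ∧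
      ∀ e ∈ rectEdges L c w h, x' e = f (src e) * x e * (f (tgt e))⁻¹ := by
  have pl : ∀ i j, i < w → j < h → _ := fun i j hi hj =>
    htriv _ (plaq_isLoop (c + ((i : ZMod L), (j : ZMod L)))) (plaq_mem c w h i j hi hj)
  set X : ℕ → ℕ → G := fun i j => x (c + ((i : ZMod L), (j : ZMod L)), false) with hX
  set Y : ℕ → ℕ → G := fun i j => x (c + ((i : ZMod L), (j : ZMod L)), true) with hY
  set X' : ℕ → ℕ → G := fun i j => x' (c + ((i : ZMod L), (j : ZMod L)), false) with hX'
  set Y' : ℕ → ℕ → G := fun i j => x' (c + ((i : ZMod L), (j : ZMod L)), true) with hY'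
  have hp : ∀ i j, i < w → j < h → X i j * Y (i + 1) j = Y i j * X i (j + 1) :=
    fun i j hi hj => plaq_flat c i j x (pl i j hi hj).1
  have hp' : ∀ i j, i < w → j < h → X' i j * Y' (i + 1) j = Y' i j * X' i (j + 1) :=
    fun i j hi hj => plaq_flat c i j x' (pl i j hi hj).2
  have hbd := cornerHol_bdry X Y X' Y' w h hp hp'
    (fun i hi => hbdry _ ⟨i, 0, rfl, by simp; omega⟩)
    (fun i hi => hbdry _ ⟨i, h, rfl, by simp; omega⟩)
    (fun j hj => hbdry _ ⟨0, j, rfl, by simp; omega⟩)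
    (fun j hj => hbdry _ ⟨w, j, rfl, by simp; omega⟩)
  have hint : ∀ i j, i ≤ w → j ≤ h →
      (c + ((i : ZMod L), (j : ZMod L)) ∈ rectIntVtx L c w h ↔
        0 < i ∧ i < w ∧ 0 < j ∧ j < h) := by
    intro i j hi hj
    constructor
    · rintro ⟨a, b, ha, ha', hb, hb', heq⟩
      obtain ⟨rfl, rfl⟩ := coord_inj c (by omega) (by omega) (by omega) (by omega) heq
      exact ⟨ha, ha', hb, hb'⟩
    · rintro ⟨h1, h2, h3, h4⟩
      exact ⟨i, j, h1, h2, h3, h4, rfl⟩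
  have key : ∀ f g : Vtx L → G,
      ((∀ v : Vtx L, v ∉ rectIntVtx L c w h → f v = 1) ∧
        ∀ e ∈ rectEdges L c w h, x' e = f (src e) * x e * (f (tgt e))⁻¹) →
      ((∀ v : Vtx L, v ∉ rectIntVtx L c w h → g v = 1) ∧
        ∀ e ∈ rectEdges L c w h, x' e = g (src e) * x e * (g (tgt e))⁻¹) → f = g := by
    rintro f g ⟨f1, f2⟩ ⟨g1, g2⟩
    have hall : ∀ i j, i ≤ w → j ≤ h → f (c + ((i : ZMod L), (j : ZMod L))) =
        g (c + ((i : ZMod L), (j : ZMod L))) := by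
      intro i j
      induction i with
      | zero =>
        intro hi hj
        have hn : ¬ (c + (((0 : ℕ) : ZMod L), (j : ZMod L)) ∈ rectIntVtx L c w h) := by
          rw [hint 0 j hi hj]; omega
        rw [f1 _ hn, g1 _ hn]
      | succ i ih =>
        intro hi hj
        have hm : ((c + ((i : ZMod L), (j : ZMod L)), false) : Edge L) ∈
            rectEdges L c w h := ⟨i, j, rfl, by simp; omega⟩
        have e1 := f2 _ hm
        rw [g2 _ hm] at e1
        simp only [src, tgt, Bool.false_eq_true, if_false, add_right_coord] at e1
        rw [ih (by omega) hj] at e1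
        exact (inv_injective (mul_left_cancel e1)).symm
    funext v
    by_cases hv : v ∈ rectIntVtx L c w h
    · obtain ⟨i, j, _, h2, _, h4, rfl⟩ := hv
      exact hall i j h2.le h4.le
    · rw [f1 v hv, g1 v hv]
  have ex : ∃ f : Vtx L → G, (∀ v : Vtx L, v ∉ rectIntVtx L c w h → f v = 1) ∧
      ∀ e ∈ rectEdges L c w h, x' e = f (src e) * x e * (f (tgt e))⁻¹ := by
    refine ⟨fun v => if v ∈ rectIntVtx L c w h then
      (cornerHol X' Y' (v - c).1.val (v - c).2.val)⁻¹ *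
        cornerHol X Y (v - c).1.val (v - c).2.val else 1, ?_, ?_⟩
    · intro v hv
      simp [hv]
    · have hf : ∀ i j, i ≤ w → j ≤ h →
          (fun v : Vtx L => if v ∈ rectIntVtx L c w h then
            (cornerHol X' Y' (v - c).1.val (v - c).2.val)⁻¹ *
            cornerHol X Y (v - c).1.val (v - c).2.val else 1)
            (c + ((i : ZMod L), (j : ZMod L))) =
          (cornerHol X' Y' i j)⁻¹ * cornerHol X Y i j := by
        intro i j hi hj
        beta_reduce
        rw [add_sub_cancel_left]
        dsimp only
        rw [ZMod.val_natCast_of_lt (show i < L by omega),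
          ZMod.val_natCast_of_lt (show j < L by omega)]
        split_ifs with hm
        · rfl
        · rw [hint i j hi hj] at hm
          rw [hbd i j hi hj (by omega), inv_mul_cancel]
      generalize (fun v : Vtx L => if v ∈ rectIntVtx L c w h then
            (cornerHol X' Y' (v - c).1.val (v - c).2.val)⁻¹ *
            cornerHol X Y (v - c).1.val (v - c).2.val else 1) = f at hf ⊢
      rintro ⟨v, d⟩ ⟨i, j, hv, hd⟩
      dsimp only at hv
      subst hv
      cases d
      · simp only [Bool.false_eq_true, if_false] at hd
        simp only [src, tgt, Bool.false_eq_true, if_false, add_right_coord]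
        rw [hf i j (by omega) hd.2, hf (i + 1) j (by omega) hd.2,
          ← cornerHol_horiz X Y w h hp i j hd.1 hd.2,
          ← cornerHol_horiz X' Y' w h hp' i j hd.1 hd.2]
        simp only [hX, hX']
        group
      · simp only [if_true] at hd
        simp only [src, tgt, if_true, add_up_coord]
        rw [hf i j (by omega) (by omega), hf i (j + 1) (by omega) (by omega)]
        simp only [cornerHol]
        simp only [hY, hY']
        group
  obtain ⟨f, hf⟩ := ex
  exact ⟨f, hf, fun g hg => key g f hg hf⟩

end QDM
end
end

section
/- Let A be a rectangular sublattice with boundary ∂A. If g_{∂A} and g'_{∂A} are two assignments of group elements to the edges of ∂A, each with trivial holonomy around the full boundary loop ∂A, then there exists a product U_{∂A} of gauge transformations A_v(h_v) at vertices v of ∂A that transforms the assignment g_{∂A} into the assignment g'_{∂A}. -/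
/-!
Kitaev's quantum double model, formalized on the concrete `L × L` periodic square
lattice on the torus (the setting of Bravyi–Hastings–Michalakis TQO conditions used
in the paper).  Vertices are `ZMod L × ZMod L`; an oriented edge is a pair
`(v, d)` of its base vertex `v` and a direction `d : Bool` (`false` = rightward,
`true` = upward).  Each edge carries `ℂ[G]`, so the total Hilbert space is
`(Edge L → G) → ℂ` with the "group basis" given by delta functions.
"Contained in a contractible subregion" is rendered as the rectangle having side
lengths `< L`, i.e. not wrapping around the torus.
-/

open scoped BigOperators Classical

noncomputable section

namespace QDM

/-- The counterclockwise boundary loop of the `w × h` rectangle with lower-left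
corner `c`: along the bottom, up the right side, backwards along the top, and
down the left side. -/
def rectBdryLoop (L : ℕ) (c : Vtx L) (w h : ℕ) : List (Step L) :=
  ((List.range w).map fun i => (((c + ((i : ZMod L), (0 : ZMod L)), false) : Edge L), true)) ++
  ((List.range h).map fun j => (((c + ((w : ZMod L), (j : ZMod L)), true) : Edge L), true)) ++
  ((List.range w).reverse.map fun i =>
      (((c + ((i : ZMod L), (h : ZMod L)), false) : Edge L), false)) ++
  ((List.range h).reverse.map fun j =>
      (((c + ((0 : ZMod L), (j : ZMod L)), true) : Edge L), false))

end QDM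

namespace QDM

theorem prod_rev_inv {G : Type} [Group G] (g : ℕ → G) (n : ℕ) :
    ((List.range n).reverse.map fun i => (g i)⁻¹).prod = (((List.range n).map g).prod)⁻¹ := by
  induction n with
  | zero => simp
  | succ n ih =>
    simp only [List.map_reverse] at ih
    simp [List.range_succ, ih]

theorem pot_exists {G : Type} [Group G] {L : ℕ} (c : Vtx L) (w h : ℕ)
    (hw : 0 < w) (hh : 0 < h) (x : Config G L)
    (hx : hol x (rectBdryLoop L c w h) = 1) :
    ∃ p : ℕ → ℕ → G, ∀ i j : ℕ,
      (i < w → j = 0 ∨ j = h →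
        p (i + 1) j = p i j * x (c + ((i : ZMod L), (j : ZMod L)), false)) ∧
      (j < h → i = 0 ∨ i = w →
        p i (j + 1) = p i j * x (c + ((i : ZMod L), (j : ZMod L)), true)) := by
  obtain ⟨S, hS⟩ : ∃ S : (ℕ → G) → ℕ → G, S = fun g n => ((List.range n).map g).prod := ⟨_, rfl⟩
  have S0 : ∀ g, S g 0 = 1 := by simp [hS]
  have S1 : ∀ g n, S g (n + 1) = S g n * g n := by simp [hS, List.range_succ]
  let b : ℕ → G := fun i => x (c + ((i : ZMod L), ((0 : ℕ) : ZMod L)), false)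
  let t : ℕ → G := fun i => x (c + ((i : ZMod L), (h : ZMod L)), false)
  let l : ℕ → G := fun j => x (c + (((0 : ℕ) : ZMod L), (j : ZMod L)), true)
  let r : ℕ → G := fun j => x (c + ((w : ZMod L), (j : ZMod L)), true)
  have key : S b w * S r h = S l h * S t w := by
    have e : S b w * S r h * (S t w)⁻¹ * (S l h)⁻¹ = 1 := by
      rw [← hx, hS]
      simp only [← prod_rev_inv]
      have fm : ∀ q : List ℕ, List.flatMap (fun a : ℕ => [(a : ZMod L)]) q
          = q.map (fun a : ℕ => (a : ZMod L)) := fun q => List.map_eq_flatMap.symm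
      simp [hol, rectBdryLoop, b, t, l, r, Function.comp_def, mul_assoc, fm]
    rw [mul_inv_eq_one, mul_inv_eq_iff_eq_mul] at e
    exact e
  refine ⟨fun i j => if j = 0 then S b i else if i = 0 then S l j else
    if i = w then S b w * S r j else S l h * S t i, fun i j => ⟨?_, ?_⟩⟩
  · rintro hi (rfl | rfl)
    · simp only [if_true]
      exact S1 b i
    · have hj : j ≠ 0 := by omega
      have h2 : i ≠ w := by omega
      have ht : S t (i + 1) = S t i * x (c + ((i : ZMod L), (j : ZMod L)), false) := S1 t i
      have e1 : (if i + 1 = w then S b w * S r j else S l j * S t (i + 1))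
          = S l j * S t (i + 1) := by
        split_ifs with hq
        · rw [hq, key]
        · rfl
      simp only [hj, h2, if_false, Nat.succ_ne_zero]
      rw [e1, ht, ← mul_assoc]
      congr 1
      split_ifs with h0
      · simp [h0, S0]
      · rfl
  · rintro hj (rfl | rfl)
    · have e := S1 l j
      rcases Nat.eq_zero_or_pos j with rfl | h0
      · simpa [S0, l] using e
      · simpa [h0.ne', l] using e
    · have e := S1 r j
      have hi : i ≠ 0 := by omega
      rcases Nat.eq_zero_or_pos j with rfl | h0
      · simpa [S0, hi, r] using e
      · simp only [h0.ne', hi, if_true, if_false, Nat.succ_ne_zero, e, mul_assoc]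
        rfl

/-- **Boundary gauge transformations.**  Let `A` be a `w × h` rectangle (with
`0 < w < L`, `0 < h < L`).  If two configurations both have trivial holonomy
around the full boundary loop `∂A`, then there is a product of gauge
transformations at the vertices of `∂A` — i.e. a function `f : V → G` supported
on the boundary vertices — transforming the first assignment into the second on
all boundary edges. -/
theorem boundary_gauge_transformation_exists
    (G : Type) [Group G] (L : ℕ) [NeZero L] (c : Vtx L) (w h : ℕ)
    (hw : 0 < w) (hwL : w < L) (hh : 0 < h) (hhL : h < L)
    (x x' : Config G L)
    (hx : hol x (rectBdryLoop L c w h) = 1)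
    (hx' : hol x' (rectBdryLoop L c w h) = 1) :
    ∃ f : Vtx L → G, (∀ v : Vtx L, v ∉ rectBdryVtx L c w h → f v = 1) ∧
      ∀ e ∈ rectBdryEdges L c w h, x' e = f (src e) * x e * (f (tgt e))⁻¹ := by
  obtain ⟨p, hp⟩ := pot_exists c w h hw hh x hx
  obtain ⟨p', hp'⟩ := pot_exists c w h hw hh x' hx'
  refine ⟨fun v => if v ∈ rectBdryVtx L c w h then
    (p' (v.1 - c.1).val (v.2 - c.2).val)⁻¹ * p (v.1 - c.1).val (v.2 - c.2).val else 1,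
    fun v hv => if_neg hv, ?_⟩
  have hF : ∀ i j : ℕ, i ≤ w → j ≤ h → (i = 0 ∨ i = w ∨ j = 0 ∨ j = h) → ∀ v : Vtx L,
      v = c + ((i : ZMod L), (j : ZMod L)) →
      (if v ∈ rectBdryVtx L c w h then
        (p' (v.1 - c.1).val (v.2 - c.2).val)⁻¹ * p (v.1 - c.1).val (v.2 - c.2).val else 1)
        = (p' i j)⁻¹ * p i j := by
    intro i j hi hj hb v hv
    rw [if_pos ⟨i, j, hi, hj, hb, hv⟩]
    have h1 : (v.1 - c.1).val = i := by
      rw [hv]; simpa using ZMod.val_natCast_of_lt (by omega : i < L)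
    have h2 : (v.2 - c.2).val = j := by
      rw [hv]; simpa using ZMod.val_natCast_of_lt (by omega : j < L)
    rw [h1, h2]
  rintro ⟨v, d⟩ ⟨i, j, rfl, hc⟩
  cases d
  · simp only [Bool.false_eq_true, if_false] at hc
    obtain ⟨hi, hj⟩ := hc
    have a := (hp i j).1 hi hj
    have a' := (hp' i j).1 hi hj
    have es := hF i j (by omega) (by omega) (by omega)
      (src (c + ((i : ZMod L), (j : ZMod L)), false)) rfl
    have et := hF (i + 1) j (by omega) (by omega) (by omega)
      (tgt (c + ((i : ZMod L), (j : ZMod L)), false)) (by simp [tgt, add_assoc])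
    simp only [es, et, a, a']
    group
  · simp only [if_true] at hc
    obtain ⟨hi, hj⟩ := hc
    have a := (hp i j).2 hj hi
    have a' := (hp' i j).2 hj hi
    have es := hF i j (by omega) (by omega) (by omega)
      (src (c + ((i : ZMod L), (j : ZMod L)), true)) rfl
    have et := hF i (j + 1) (by omega) (by omega) (by omega)
      (tgt (c + ((i : ZMod L), (j : ZMod L)), true)) (by simp [tgt, add_assoc])
    simp only [es, et, a, a']
    group


end QDM
end
end

section
/- Let |ψ⟩ be a normalized ground state of Kitaev's quantum double model and let A be a rectangular sublattice contained in a contractible subregion with L boundary edges. Then the reduced state ρ_A = Tr_{Ā}|ψ⟩⟨ψ| is the maximally mixed state on a subspace of dimension |G|^{L−1}, so its von Neumann entropy is S(ρ_A) = (L−1)·log|G| = L·log|G| − log|G|. Consequently the topological entanglement entropy of the model is S_topo = −γ with γ = log|G|. -/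
/-!
Kitaev's quantum double model, formalized on the concrete `L × L` periodic square
lattice on the torus (the setting of Bravyi–Hastings–Michalakis TQO conditions used
in the paper).  Vertices are `ZMod L × ZMod L`; an oriented edge is a pair
`(v, d)` of its base vertex `v` and a direction `d : Bool` (`false` = rightward,
`true` = upward).  Each edge carries `ℂ[G]`, so the total Hilbert space is
`(Edge L → G) → ℂ` with the "group basis" given by delta functions.
"Contained in a contractible subregion" is rendered as the rectangle having side
lengths `< L`, i.e. not wrapping around the torus.
-/

open scoped BigOperators Classical

noncomputable section

namespace QDM

/-- The von Neumann entropy `S(ρ) = −Tr(ρ log ρ)` of a Hermitian matrix,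
computed from its eigenvalues (with the convention `0 log 0 = 0`, which holds
automatically since `Real.log 0 = 0`). -/
noncomputable def vnEntropy {n : Type} [Fintype n] [DecidableEq n]
    {ρ : Matrix n n ℂ} (hρ : ρ.IsHermitian) : ℝ :=
  -∑ i, hρ.eigenvalues i * Real.log (hρ.eigenvalues i)

theorem la_main {α : Type} [Fintype α] [DecidableEq α] (M : Matrix α α ℂ) (d : ℕ) (hd : 0 < d)
    (hM : M.IsHermitian) (htr : M.trace = 1) (hsq : M * M = (d : ℂ)⁻¹ • M) :
    (∃ (W : Submodule ℂ (α → ℂ)) (Q : (α → ℂ) →ₗ[ℂ] (α → ℂ)),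
      Module.finrank ℂ W = d ∧ IsOrthProjOnto Q W ∧
      Matrix.toLin' M = (d : ℂ)⁻¹ • Q) ∧ vnEntropy hM = Real.log d := by
  have hd0 : (d : ℂ) ≠ 0 := by exact_mod_cast hd.ne'
  have hidem : ((d : ℂ) • M) * ((d : ℂ) • M) = (d : ℂ) • M := by
    rw [Matrix.smul_mul, Matrix.mul_smul, hsq, smul_smul, smul_smul]
    congr 1
    field_simp
  have hQ : IsIdempotentElem (Matrix.toLin' ((d : ℂ) • M)) := by
    unfold IsIdempotentElem
    rw [Module.End.mul_eq_comp, ← Matrix.toLin'_mul, hidem]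
  refine ⟨⟨LinearMap.range (Matrix.toLin' ((d : ℂ) • M)), Matrix.toLin' ((d : ℂ) • M),
    ?_, ⟨?_, rfl, ?_⟩, ?_⟩, ?_⟩
  · have h1 := (LinearMap.IsIdempotentElem.isProj_range _ hQ).trace
    rw [Matrix.trace_toLin'_eq, Matrix.trace_smul, htr] at h1
    simp only [smul_eq_mul, mul_one] at h1
    exact_mod_cast h1.symm
  · exact hQ
  · intro φ χ
    have hH : ((d : ℂ) • M).conjTranspose = (d : ℂ) • M := by
      rw [Matrix.conjTranspose_smul, hM.eq]; simp
    have key : ∀ φ χ : α → ℂ, finner φ χ = star φ ⬝ᵥ χ := fun φ χ => rfl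
    rw [key, key, Matrix.toLin'_apply, Matrix.toLin'_apply, Matrix.star_mulVec, hH,
      Matrix.dotProduct_mulVec]
  · rw [map_smul, smul_smul, inv_mul_cancel₀ hd0, one_smul]
  · unfold vnEntropy
    have hev : ∀ i, hM.eigenvalues i = 0 ∨ hM.eigenvalues i = (d : ℝ)⁻¹ := by
      intro i
      have h1 := hM.mulVec_eigenvectorBasis i
      set v := (hM.eigenvectorBasis i) with hv
      have h2 : (M * M).mulVec v = ((hM.eigenvalues i) ^ 2) • (v : α → ℂ) := by
        rw [← Matrix.mulVec_mulVec, h1, Matrix.mulVec_smul, h1, smul_smul, sq]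
      rw [hsq, Matrix.smul_mulVec, h1] at h2
      have hvne : (v : α → ℂ) ≠ 0 := by
        intro h0
        have : v = 0 := by
          ext j; exact congrFun h0 j
        exact hM.eigenvectorBasis.orthonormal.ne_zero i this
      obtain ⟨j, hj⟩ := Function.ne_iff.mp hvne
      have h3 := congrFun h2 j
      simp only [Pi.smul_apply, smul_eq_mul, Complex.real_smul] at h3
      have hj' : (v : α → ℂ) j ≠ 0 := hj
      have h4 : (d : ℂ)⁻¹ * (hM.eigenvalues i : ℂ) = ((hM.eigenvalues i ^ 2 : ℝ) : ℂ) := by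
        apply mul_right_cancel₀ hj'
        rw [mul_assoc]; exact h3
      have h5 : (d : ℝ)⁻¹ * hM.eigenvalues i = hM.eigenvalues i ^ 2 := by
        apply Complex.ofReal_injective
        push_cast at h4 ⊢
        exact h4
      by_cases h0 : hM.eigenvalues i = 0
      · exact Or.inl h0
      · right
        rw [sq] at h5
        exact (mul_right_cancel₀ h0 h5).symm
    have hsum : ∑ i, hM.eigenvalues i = 1 := by
      have := hM.trace_eq_sum_eigenvalues
      rw [htr] at this
      have h' : ((∑ i, hM.eigenvalues i : ℝ) : ℂ) = 1 := by
        rw [this]; push_cast; rfl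
      exact_mod_cast h'
    have : ∀ i, hM.eigenvalues i * Real.log (hM.eigenvalues i)
        = hM.eigenvalues i * (- Real.log d) := by
      intro i
      rcases hev i with h | h
      · rw [h]; simp
      · rw [h, Real.log_inv]
    rw [Finset.sum_congr rfl (fun i _ => this i), ← Finset.sum_mul, hsum]
    ring

theorem la_block {α S T : Type} [Fintype α] [DecidableEq α] [Fintype S] [Fintype T]
    [Nonempty S] [Nonempty T]
    (ι : S × T → α) (hι : Function.Injective ι) (M : Matrix α α ℂ) (lam : ℂ)
    (hM : ∀ s t t', M (ι (s, t)) (ι (s, t')) = lam)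
    (hM0 : ∀ a a', M a a' ≠ 0 → ∃ s t t', a = ι (s, t) ∧ a' = ι (s, t'))
    (htr : M.trace = 1) :
    M * M = (Fintype.card S : ℂ)⁻¹ • M := by
  let B : Matrix α S ℂ := fun a s => if ∃ t, a = ι (s, t) then 1 else 0
  have hB : ∀ s t s', B (ι (s, t)) s' = if s = s' then 1 else 0 := by
    intro s t s'
    simp only [B]
    congr 1
    apply propext
    constructor
    · rintro ⟨t', h⟩
      have := hι h
      simp only [Prod.mk.injEq] at this
      exact this.1
    · rintro rfl; exact ⟨t, rfl⟩
  have hMB : M = lam • (B * B.transpose) := by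
    ext a a'
    rw [Matrix.smul_apply, Matrix.mul_apply]
    by_cases h : ∃ s t t', a = ι (s, t) ∧ a' = ι (s, t')
    · obtain ⟨s, t, t', rfl, rfl⟩ := h
      simp [hM, hB, Matrix.transpose_apply]
    · have h0 : M a a' = 0 := by
        by_contra h1; exact h (hM0 a a' h1)
      rw [h0, Finset.sum_eq_zero, smul_zero]
      intro s _
      by_contra h1
      apply h
      have hB1 : ∀ a, B a s ≠ 0 → ∃ t, a = ι (s, t) := by
        intro a ha
        by_contra hn
        exact ha (if_neg hn)
      obtain ⟨t, ht⟩ := hB1 a (left_ne_zero_of_mul h1)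
      obtain ⟨t', ht'⟩ := hB1 a' (right_ne_zero_of_mul h1)
      exact ⟨s, t, t', ht, ht'⟩
  have hBB : B.transpose * B = (Fintype.card T : ℂ) • (1 : Matrix S S ℂ) := by
    ext s s'
    rw [Matrix.mul_apply, Matrix.smul_apply, Matrix.one_apply]
    have : ∀ a, B.transpose s a * B a s' = ∑ t : T, if a = ι (s, t) then B a s' else 0 := by
      intro a
      simp only [Matrix.transpose_apply]
      by_cases h : ∃ t, a = ι (s, t)
      · obtain ⟨t, rfl⟩ := h
        rw [hB, if_pos rfl, one_mul, Finset.sum_eq_single t]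
        · simp
        · intro t' _ hne
          rw [if_neg]
          intro h'
          have := hι h'
          simp only [Prod.mk.injEq] at this
          exact hne this.2.symm
        · simp
      · rw [Finset.sum_eq_zero]
        · simp [B, h]
        · intro t _
          rw [if_neg]
          intro h'; exact h ⟨t, h'⟩
    rw [Finset.sum_congr rfl (fun a _ => this a), Finset.sum_comm]
    simp [hB]
  have hl : lam * (Fintype.card T : ℂ) * (Fintype.card S : ℂ) = 1 := by
    rw [← htr, hMB, Matrix.trace_smul, Matrix.trace_mul_comm, hBB, Matrix.trace_smul,
      Matrix.trace_one]
    simp [mul_assoc]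
  have hS : (Fintype.card S : ℂ) ≠ 0 := by
    exact_mod_cast Fintype.card_ne_zero
  have hl' : lam * (Fintype.card T : ℂ) = (Fintype.card S : ℂ)⁻¹ := by
    field_simp; exact hl
  rw [← hl']
  conv_lhs => rw [hMB]
  rw [Matrix.smul_mul, Matrix.mul_smul, Matrix.mul_assoc, ← Matrix.mul_assoc B.transpose B,
    hBB, Matrix.smul_mul, Matrix.one_mul, Matrix.mul_smul]
  conv_rhs => rw [hMB]
  simp only [smul_smul]
  congr 1
  ring

/-! gauge invariance and flatness -/

theorem gs_gaugeOne {G : Type} [Group G] [Fintype G] {L : ℕ} [NeZero L] {ψ : H G L}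
    (hψ : ψ ∈ groundSpace G L) (v : Vtx L) (g : G) (x : Config G L) :
    ψ (gaugeOne v g x) = ψ x := by
  have h1 : Av G L v ψ = ψ := by
    have := (Submodule.mem_inf.mp hψ).1
    rw [Submodule.mem_iInf] at this
    have := this v
    rw [LinearMap.mem_ker, LinearMap.sub_apply, sub_eq_zero] at this
    exact this
  have h2 : ∀ y, ψ y = (Fintype.card G : ℂ)⁻¹ * ∑ k : G, ψ (gaugeOne v k⁻¹ y) := by
    intro y
    conv_lhs => rw [← h1]
    simp [Av, Avg, LinearMap.sum_apply, Finset.sum_apply, LinearMap.funLeft_apply]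
  have h3 : ∀ k : G, gaugeOne v k (gaugeOne v g x) = gaugeOne v (k * g) x := by
    intro k
    funext e
    simp only [gaugeOne]
    split_ifs <;> simp [mul_assoc]
  rw [h2 (gaugeOne v g x), h2 x]
  congr 1
  simp only [h3]
  rw [← Equiv.sum_comp (Equiv.mulLeft g)]
  apply Finset.sum_congr rfl
  intro k _
  simp

theorem gs_gaugeAll {G : Type} [Group G] [Fintype G] {L : ℕ} [NeZero L] {ψ : H G L}
    (hψ : ψ ∈ groundSpace G L) (f : Vtx L → G) (x : Config G L) :
    ψ (gaugeAll f x) = ψ x := by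
  have key : ∀ s : Finset (Vtx L), ψ (gaugeAll (fun v => if v ∈ s then f v else 1) x) = ψ x := by
    intro s
    induction s using Finset.induction_on with
    | empty => congr 1; funext e; simp [gaugeAll]
    | insert v s hv ih =>
      rw [← ih, ← gs_gaugeOne hψ v (f v) (gaugeAll (fun v => if v ∈ s then f v else 1) x)]
      congr 1
      funext e
      have hm : ∀ u, (if u ∈ insert v s then f u else 1)
          = (if u = v then f v else 1) * (if u ∈ s then f u else 1) := by
        intro u
        by_cases h : u = v
        · subst h; simp [hv]
        · simp [h]
      have hi : ∀ u, (if u = v then (f v)⁻¹ else 1) = (if u = v then f v else 1)⁻¹ := by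
        intro u; split_ifs <;> simp
      simp only [gaugeAll, gaugeOne, hm, hi, mul_inv_rev, mul_assoc]
  have := key Finset.univ
  simpa using this

/-- lattice point in coordinates -/
def pt {L : ℕ} (c : Vtx L) (i j : ℕ) : Vtx L := c + ((i : ZMod L), (j : ZMod L))

theorem pt_right {L : ℕ} (c : Vtx L) (i j : ℕ) : pt c i j + (1, 0) = pt c (i + 1) j := by
  ext <;> simp [pt, add_assoc]

theorem pt_up {L : ℕ} (c : Vtx L) (i j : ℕ) : pt c i j + (0, 1) = pt c i (j + 1) := by
  ext <;> simp [pt, add_assoc]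

theorem pt_wrap1 {L : ℕ} (c : Vtx L) (j : ℕ) : pt c L j = pt c 0 j := by
  ext <;> simp [pt]

theorem pt_wrap2 {L : ℕ} (c : Vtx L) (i : ℕ) : pt c i L = pt c i 0 := by
  ext <;> simp [pt]

theorem pt_inj {L : ℕ} (c : Vtx L) {i j i' j' : ℕ} (hi : i < L) (hj : j < L) (hi' : i' < L)
    (hj' : j' < L) (h : pt c i j = pt c i' j') : i = i' ∧ j = j' := by
  have h1 := add_left_cancel h
  simp only [Prod.mk.injEq, ZMod.natCast_eq_natCast_iff'] at h1
  rw [Nat.mod_eq_of_lt hi, Nat.mod_eq_of_lt hi', Nat.mod_eq_of_lt hj, Nat.mod_eq_of_lt hj'] at h1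
  exact h1

theorem mem_rect_up {L : ℕ} (c : Vtx L) {w h i j : ℕ} (hwL : w + 1 < L) (hhL : h + 1 < L)
    (hi : i < L) (hj : j < L) : (pt c i j, true) ∈ rectEdges L c w h ↔ i ≤ w ∧ j < h := by
  constructor
  · rintro ⟨i', j', h1, h2⟩
    simp only [if_true] at h2
    obtain ⟨rfl, rfl⟩ := pt_inj c hi hj (by omega) (by omega) h1
    exact h2
  · intro h1
    exact ⟨i, j, rfl, by simpa using h1⟩

theorem mem_rect_right {L : ℕ} (c : Vtx L) {w h i j : ℕ} (hwL : w + 1 < L) (hhL : h + 1 < L)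
    (hi : i < L) (hj : j < L) : (pt c i j, false) ∈ rectEdges L c w h ↔ i < w ∧ j ≤ h := by
  constructor
  · rintro ⟨i', j', h1, h2⟩
    simp only [Bool.false_eq_true, if_false] at h2
    obtain ⟨rfl, rfl⟩ := pt_inj c hi hj (by omega) (by omega) h1
    exact h2
  · intro h1
    exact ⟨i, j, rfl, by simpa using h1⟩

/-- configuration in coordinates: plaquette relation everywhere -/
def FlatX {G : Type} [Group G] {L : ℕ} (c : Vtx L) (x : Config G L) : Prop :=
  ∀ i j : ℕ, x (pt c i j, false) * x (pt c (i + 1) j, true)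
    = x (pt c i j, true) * x (pt c i (j + 1), false)

theorem gs_flat {G : Type} [Group G] [Fintype G] {L : ℕ} [NeZero L] {ψ : H G L}
    (hψ : ψ ∈ groundSpace G L) (c : Vtx L) (x : Config G L) (hx : ψ x ≠ 0) : FlatX c x := by
  intro i j
  have := (Submodule.mem_inf.mp hψ).2
  rw [Submodule.mem_iInf] at this
  have := this (pt c i j)
  rw [LinearMap.mem_ker, LinearMap.sub_apply, sub_eq_zero] at this
  have := congrFun this x
  simp only [Bp, diagOpF, LinearMap.coe_mk, AddHom.coe_mk, LinearMap.id_apply] at this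
  have hh : hol x (plaqBoundary (pt c i j)) = 1 := by
    by_contra hn
    rw [if_neg hn, zero_mul] at this
    exact hx this.symm
  simp only [hol, plaqBoundary, pt_right, pt_up, List.map_cons, List.map_nil, List.prod_cons,
    List.prod_nil, if_true, Bool.false_eq_true, if_false, mul_one] at hh
  rw [← mul_assoc, ← mul_assoc, mul_inv_eq_one, mul_inv_eq_iff_eq_mul] at hh
  exact hh

/-- parallel transport from the corner -/
def tr {G : Type} [Group G] {L : ℕ} (c : Vtx L) (x : Config G L) : ℕ → ℕ → G
  | 0, 0 => 1
  | i + 1, 0 => tr c x i 0 * x (pt c i 0, false)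
  | i, j + 1 => tr c x i j * x (pt c i j, true)

theorem tr_right {G : Type} [Group G] {L : ℕ} (c : Vtx L) (x : Config G L) (hx : FlatX c x)
    (i j : ℕ) : tr c x (i + 1) j = tr c x i j * x (pt c i j, false) := by
  induction j with
  | zero => rw [tr]
  | succ j ih =>
    rw [tr, tr, ih, mul_assoc, hx, mul_assoc]

theorem tr_up {G : Type} [Group G] {L : ℕ} (c : Vtx L) (x : Config G L)
    (i j : ℕ) : tr c x i (j + 1) = tr c x i j * x (pt c i j, true) := by
  rw [tr]

theorem tr_zero {G : Type} [Group G] {L : ℕ} (c : Vtx L) (x : Config G L) :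
    tr c x 0 0 = 1 := by rw [tr]

/-- two flat configurations agreeing outside the rectangle have the same transport to the
boundary vertices. -/
theorem tr_bdry {G : Type} [Group G] {L : ℕ} (c : Vtx L) {w h : ℕ}
    (hwL : w + 1 < L) (hhL : h + 1 < L) (x y : Config G L)
    (hx : FlatX c x) (hy : FlatX c y) (hxy : ∀ e, e ∉ rectEdges L c w h → x e = y e)
    (i j : ℕ) (hi : i ≤ w) (hj : j ≤ h) (hb : i = 0 ∨ i = w ∨ j = 0 ∨ j = h) :
    tr c x i j = tr c y i j := by
  have ou : ∀ i j, i < L → j < L → ¬ (i ≤ w ∧ j < h) → x (pt c i j, true) = y (pt c i j, true) :=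
    fun i j h1 h2 h3 => hxy _ (by rwa [mem_rect_up c hwL hhL h1 h2])
  have orr : ∀ i j, i < L → j < L → ¬ (i < w ∧ j ≤ h) →
      x (pt c i j, false) = y (pt c i j, false) :=
    fun i j h1 h2 h3 => hxy _ (by rwa [mem_rect_right c hwL hhL h1 h2])
  have bot : ∀ i, i < w → x (pt c i 0, false) = y (pt c i 0, false) := by
    intro i hi
    have h1 := hx i (L - 1)
    have h2 := hy i (L - 1)
    rw [show L - 1 + 1 = L by omega, pt_wrap2] at h1 h2
    rw [orr i (L - 1) (by omega) (by omega) (by omega),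
      ou (i + 1) (L - 1) (by omega) (by omega) (by omega),
      ou i (L - 1) (by omega) (by omega) (by omega), h2] at h1
    exact (mul_left_cancel h1).symm
  have left : ∀ j, j < h → x (pt c 0 j, true) = y (pt c 0 j, true) := by
    intro j hj
    have h1 := hx (L - 1) j
    have h2 := hy (L - 1) j
    rw [show L - 1 + 1 = L by omega, pt_wrap1] at h1 h2
    rw [orr (L - 1) j (by omega) (by omega) (by omega),
      orr (L - 1) (j + 1) (by omega) (by omega) (by omega),
      ou (L - 1) j (by omega) (by omega) (by omega), ← h2] at h1
    exact mul_left_cancel h1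
  have right : ∀ j, j < h → x (pt c w j, true) = y (pt c w j, true) := by
    intro j hj
    have h1 := hx w j
    have h2 := hy w j
    rw [orr w j (by omega) (by omega) (by omega),
      orr w (j + 1) (by omega) (by omega) (by omega),
      ou (w + 1) j (by omega) (by omega) (by omega), h2] at h1
    exact (mul_right_cancel h1).symm
  have top : ∀ i, i < w → x (pt c i h, false) = y (pt c i h, false) := by
    intro i hi
    have h1 := hx i h
    have h2 := hy i h
    rw [orr i (h + 1) (by omega) (by omega) (by omega),
      ou (i + 1) h (by omega) (by omega) (by omega),
      ou i h (by omega) (by omega) (by omega), ← h2] at h1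
    exact mul_right_cancel h1
  have tbot : ∀ i, i ≤ w → tr c x i 0 = tr c y i 0 := by
    intro i
    induction i with
    | zero => intro _; rw [tr_zero, tr_zero]
    | succ i ih => intro hi; rw [tr_right c x hx, tr_right c y hy, ih (by omega), bot i (by omega)]
  have tleft : ∀ j, j ≤ h → tr c x 0 j = tr c y 0 j := by
    intro j
    induction j with
    | zero => intro _; rw [tr_zero, tr_zero]
    | succ i ih => intro hi; rw [tr_up, tr_up, ih (by omega), left i (by omega)]
  have tright : ∀ j, j ≤ h → tr c x w j = tr c y w j := by
    intro j
    induction j with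
    | zero => intro _; exact tbot w le_rfl
    | succ i ih => intro hi; rw [tr_up, tr_up, ih (by omega), right i (by omega)]
  have ttop : ∀ i, i ≤ w → tr c x i h = tr c y i h := by
    intro i
    induction i with
    | zero => intro _; exact tleft h le_rfl
    | succ i ih => intro hi; rw [tr_right c x hx, tr_right c y hy, ih (by omega), top i (by omega)]
  rcases hb with rfl | rfl | rfl | rfl
  · exact tleft j hj
  · exact tright j hj
  · exact tbot i hi
  · exact ttop i hi

/-! counting -/

theorem card_bdry {L : ℕ} [NeZero L] (c : Vtx L) {w h : ℕ} (hw : 0 < w) (hh : 0 < h)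
    (hwL : w + 1 < L) (hhL : h + 1 < L) :
    Fintype.card {v : Vtx L // v ∈ rectBdryVtx L c w h ∧ v ≠ c} = 2 * (w + h) - 1 := by
  let R : Finset (ℕ × ℕ) := Finset.range (w + 1) ×ˢ Finset.range (h + 1)
  let I : Finset (ℕ × ℕ) := Finset.Ioo 0 w ×ˢ Finset.Ioo 0 h
  let P : Finset (ℕ × ℕ) := R \ (insert (0, 0) I)
  have hc : pt c 0 0 = c := by ext <;> simp [pt]
  have hP : P.card = 2 * (w + h) - 1 := by
    have hsub : insert (0, 0) I ⊆ R := by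
      intro p hp
      simp only [Finset.mem_insert, I, R, Finset.mem_product, Finset.mem_Ioo,
        Finset.mem_range] at hp ⊢
      rcases hp with rfl | hp
      · simp
      · omega
    have hn : ((0, 0) : ℕ × ℕ) ∉ I := by simp [I]
    rw [Finset.card_sdiff_of_subset hsub, Finset.card_insert_of_notMem hn]
    simp only [R, I, Finset.card_product, Finset.card_range, Nat.card_Ioo]
    obtain ⟨w, rfl⟩ : ∃ k, w = k + 1 := ⟨w - 1, by omega⟩
    obtain ⟨h, rfl⟩ : ∃ k, h = k + 1 := ⟨h - 1, by omega⟩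
    simp only [Nat.sub_zero, Nat.add_sub_cancel]
    have : (w + 1 + 1) * (h + 1 + 1) = w * h + (2 * w + 2 * h + 4) := by ring
    omega
  have hPm : ∀ p ∈ P, p.1 ≤ w ∧ p.2 ≤ h ∧ (p.1 = 0 ∨ p.1 = w ∨ p.2 = 0 ∨ p.2 = h) ∧
      ¬ (p.1 = 0 ∧ p.2 = 0) := by
    rintro ⟨i, j⟩ hp
    simp only [P, R, I, Finset.mem_sdiff, Finset.mem_product, Finset.mem_range, Finset.mem_insert,
      Finset.mem_Ioo, Prod.mk.injEq] at hp
    simp only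
    omega
  rw [Fintype.card_subtype, ← hP]
  have : Finset.univ.filter (fun v : Vtx L => v ∈ rectBdryVtx L c w h ∧ v ≠ c)
      = P.image (fun p => pt c p.1 p.2) := by
    ext v
    simp only [Finset.mem_filter, Finset.mem_univ, true_and, Finset.mem_image]
    constructor
    · rintro ⟨⟨i, j, hi, hj, hb, rfl⟩, hne⟩
      refine ⟨(i, j), ?_, rfl⟩
      have : ¬ (i = 0 ∧ j = 0) := by
        rintro ⟨rfl, rfl⟩
        exact hne hc
      simp only [P, R, I, Finset.mem_sdiff, Finset.mem_product, Finset.mem_range,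
        Finset.mem_insert, Finset.mem_Ioo, Prod.mk.injEq]
      omega
    · rintro ⟨p, hp, rfl⟩
      obtain ⟨h1, h2, h3, h4⟩ := hPm p hp
      refine ⟨⟨p.1, p.2, h1, h2, h3, rfl⟩, fun h5 => h4 ?_⟩
      have h6 : pt c p.1 p.2 = pt c 0 0 := by rw [hc]; exact h5
      exact pt_inj c (by omega) (by omega) (by omega) (by omega) h6
  rw [this, Finset.card_image_of_injOn]
  intro p hp q hq hpq
  have h1 := hPm p hp
  have h2 := hPm q hq
  have := pt_inj c (by omega) (by omega) (by omega) (by omega) hpq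
  exact Prod.ext this.1 this.2

/-- gradient of a vertex function on the rectangle's edges -/
def grad {G : Type} [Group G] {L : ℕ} (A : Set (Edge L)) (f : Vtx L → G) :
    {e : Edge L // e ∈ A} → G := fun e => f (src e.1) * (f (tgt e.1))⁻¹

/-- vertex function from boundary and interior data -/
def extf {G : Type} [Group G] {L : ℕ} (c : Vtx L) (w h : ℕ)
    (p : ({v : Vtx L // v ∈ rectBdryVtx L c w h ∧ v ≠ c} → G) ×
      ({v : Vtx L // v ∈ rectIntVtx L c w h} → G)) : Vtx L → G :=
  fun v => if h1 : v ∈ rectBdryVtx L c w h ∧ v ≠ c then p.1 ⟨v, h1⟩ else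
    if h2 : v ∈ rectIntVtx L c w h then p.2 ⟨v, h2⟩ else 1

theorem not_bdry_of_int {L : ℕ} (c : Vtx L) {w h : ℕ} (hwL : w + 1 < L) (hhL : h + 1 < L)
    {v : Vtx L} (hv : v ∈ rectIntVtx L c w h) : v ∉ rectBdryVtx L c w h := by
  obtain ⟨i, j, h1, h2, h3, h4, rfl⟩ := hv
  rintro ⟨i', j', g1, g2, g3, g4⟩
  have := pt_inj c (by omega) (by omega) (by omega) (by omega) g4
  omega

theorem c_bdry {L : ℕ} (c : Vtx L) (w h : ℕ) : c ∈ rectBdryVtx L c w h :=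
  ⟨0, 0, by omega, by omega, by simp, by ext <;> simp⟩

theorem extf_c {G : Type} [Group G] {L : ℕ} (c : Vtx L) {w h : ℕ}
    (hwL : w + 1 < L) (hhL : h + 1 < L) (p) : extf (G := G) c w h p c = 1 := by
  have : c ∉ rectIntVtx L c w h := fun hc => not_bdry_of_int c hwL hhL hc (c_bdry c w h)
  simp [extf, this]

theorem tgt_up {L : ℕ} (c : Vtx L) (i j : ℕ) : tgt (pt c i j, true) = pt c i (j + 1) := by
  simp [tgt, pt_up]

theorem tgt_right {L : ℕ} (c : Vtx L) (i j : ℕ) : tgt (pt c i j, false) = pt c (i + 1) j := by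
  simp [tgt, pt_right]

theorem grad_inj {G : Type} [Group G] {L : ℕ} (c : Vtx L) {w h : ℕ} (f g : Vtx L → G)
    (hf : f c = 1) (hg : g c = 1) (hfg : grad (rectEdges L c w h) f = grad (rectEdges L c w h) g)
    (i j : ℕ) (hi : i ≤ w) (hj : j ≤ h) : f (pt c i j) = g (pt c i j) := by
  have hc : pt c 0 0 = c := by ext <;> simp [pt]
  have bot : ∀ i, i ≤ w → f (pt c i 0) = g (pt c i 0) := by
    intro i
    induction i with
    | zero => intro _; rw [hc, hf, hg]
    | succ i ih =>
      intro hi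
      have := congrFun hfg ⟨(pt c i 0, false), ⟨i, 0, rfl, by simp; omega⟩⟩
      simp only [grad, tgt_right, src] at this
      rw [ih (by omega)] at this
      exact inv_injective (mul_left_cancel this)
  induction j with
  | zero => exact bot i hi
  | succ j ih =>
    have := congrFun hfg ⟨(pt c i j, true), ⟨i, j, rfl, by simp; omega⟩⟩
    simp only [grad, tgt_up, src] at this
    rw [ih (by omega)] at this
    exact inv_injective (mul_left_cancel this)

theorem iota_inj {G : Type} [Group G] {L : ℕ} (c : Vtx L) {w h : ℕ}
    (hwL : w + 1 < L) (hhL : h + 1 < L) :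
    Function.Injective (fun p => grad (rectEdges L c w h) (extf (G := G) c w h p)) := by
  intro p q hpq
  have key := grad_inj c _ _ (extf_c c hwL hhL p) (extf_c c hwL hhL q) hpq
  refine Prod.ext ?_ ?_
  · funext ⟨v, hv⟩
    obtain ⟨i, j, hi, hj, hb, hv'⟩ := hv.1
    have := key i j hi hj
    rw [show pt c i j = v from hv'.symm] at this
    simpa [extf, hv] using this
  · funext ⟨v, hv⟩
    have hnb := not_bdry_of_int c hwL hhL hv
    obtain ⟨i, j, hi, hi', hj, hj', hv'⟩ := id hv
    have := key i j hi'.le hj'.le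
    rw [show pt c i j = v from hv'.symm] at this
    simpa [extf, hv, hnb] using this

/-- gradient of a normalized function is in the image of the parametrization -/
theorem grad_extf {G : Type} [Group G] {L : ℕ} (c : Vtx L) {w h : ℕ}
    (hwL : w + 1 < L) (hhL : h + 1 < L) (f : Vtx L → G) (hf : f c = 1) :
    grad (rectEdges L c w h) (extf c w h (fun v => f v.1, fun v => f v.1))
      = grad (rectEdges L c w h) f := by
  have key : ∀ i j, i ≤ w → j ≤ h →
      extf c w h (fun v => f v.1, fun v => f v.1) (pt c i j) = f (pt c i j) := by
    intro i j hi hj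
    by_cases hc : pt c i j = c
    · rw [hc, extf_c c hwL hhL, hf]
    by_cases hb : i = 0 ∨ i = w ∨ j = 0 ∨ j = h
    · have : pt c i j ∈ rectBdryVtx L c w h := ⟨i, j, hi, hj, hb, rfl⟩
      simp [extf, this, hc]
    · have hI : pt c i j ∈ rectIntVtx L c w h :=
        ⟨i, j, by omega, by omega, by omega, by omega, rfl⟩
      have hnb := not_bdry_of_int c hwL hhL hI
      simp [extf, hI, hnb]
  funext ⟨⟨v, d⟩, i, j, h1, h2⟩
  obtain rfl : v = pt c i j := h1
  cases d
  · simp only [Bool.false_eq_true, if_false] at h2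
    simp only [grad, src, tgt_right]
    rw [key i j (by omega) (by omega), key (i + 1) j (by omega) (by omega)]
  · simp only [if_true] at h2
    simp only [grad, src, tgt_up]
    rw [key i j (by omega) (by omega), key i (j + 1) (by omega) (by omega)]

/-- transport as vertex function -/
def trf {G : Type} [Group G] {L : ℕ} (c : Vtx L) (x : Config G L) : Vtx L → G :=
  fun v => (tr c x (v.1 - c.1).val (v.2 - c.2).val)⁻¹

theorem trf_pt {G : Type} [Group G] {L : ℕ} (c : Vtx L) (x : Config G L) {i j : ℕ}
    (hi : i < L) (hj : j < L) : trf c x (pt c i j) = (tr c x i j)⁻¹ := by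
  simp [trf, pt, ZMod.val_natCast, Nat.mod_eq_of_lt hi, Nat.mod_eq_of_lt hj]

theorem trf_c {G : Type} [Group G] {L : ℕ} (c : Vtx L) (x : Config G L) :
    trf c x c = 1 := by
  simp [trf, tr_zero]

theorem grad_trf {G : Type} [Group G] {L : ℕ} (c : Vtx L) {w h : ℕ}
    (hwL : w + 1 < L) (hhL : h + 1 < L) (x : Config G L) (hx : FlatX c x)
    (e : {e : Edge L // e ∈ rectEdges L c w h}) :
    grad (rectEdges L c w h) (trf c x) e = x e.1 := by
  obtain ⟨⟨v, d⟩, i, j, h1, h2⟩ := e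
  obtain rfl : v = pt c i j := h1
  cases d
  · simp only [Bool.false_eq_true, if_false] at h2
    simp only [grad, src, tgt_right]
    rw [trf_pt c x (by omega) (by omega), trf_pt c x (by omega) (by omega), tr_right c x hx]
    simp
  · simp only [if_true] at h2
    simp only [grad, src, tgt_up]
    rw [trf_pt c x (by omega) (by omega), trf_pt c x (by omega) (by omega), tr_up]
    simp

/-- exterior gauge action -/
def gaugeB {G : Type} [Group G] {L : ℕ} (A : Set (Edge L)) (g : Vtx L → G) :
    ({e : Edge L // e ∉ A} → G) ≃ ({e : Edge L // e ∉ A} → G) where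
  toFun b := fun e => g (src e.1) * b e * (g (tgt e.1))⁻¹
  invFun b := fun e => (g (src e.1))⁻¹ * b e * g (tgt e.1)
  left_inv b := by funext e; simp [mul_assoc]
  right_inv b := by funext e; simp [mul_assoc]

theorem gauge_merge {G : Type} [Group G] {L : ℕ} (A : Set (Edge L)) (g : Vtx L → G)
    (b : {e : Edge L // e ∉ A} → G) :
    merge A (grad A g) (gaugeB A g b) = gaugeAll g (merge A (fun _ => 1) b) := by
  funext e
  by_cases he : e ∈ A
  · simp [merge, gaugeAll, he, grad]
  · simp [merge, gaugeAll, he, gaugeB]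

theorem rho_grad {G : Type} [Group G] [Fintype G] {L : ℕ} [NeZero L] {ψ : H G L}
    (hψ : ψ ∈ groundSpace G L) (A : Set (Edge L)) (g g' : Vtx L → G)
    (hgg : ∀ e, e ∉ A → g (src e) = g' (src e) ∧ g (tgt e) = g' (tgt e)) :
    rho A ψ (grad A g) (grad A g') = rho A ψ (fun _ => 1) (fun _ => 1) := by
  have hB : gaugeB A g = gaugeB A g' := by
    ext b e
    simp [gaugeB, (hgg e.1 e.2).1, (hgg e.1 e.2).2]
  simp only [rho, Matrix.of_apply]
  rw [← Equiv.sum_comp (gaugeB A g)]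
  apply Finset.sum_congr rfl
  intro b _
  rw [gauge_merge]
  rw [hB, gauge_merge, gs_gaugeAll hψ, gs_gaugeAll hψ]

theorem extf_out {G : Type} [Group G] {L : ℕ} (c : Vtx L) {w h : ℕ}
    (s) (t t') (v : Vtx L) (hv : v ∉ rectIntVtx L c w h) :
    extf (G := G) c w h (s, t) v = extf (G := G) c w h (s, t') v := by
  simp [extf, hv]

theorem out_not_int {L : ℕ} (c : Vtx L) {w h : ℕ} (e : Edge L) (he : e ∉ rectEdges L c w h) :
    src e ∉ rectIntVtx L c w h ∧ tgt e ∉ rectIntVtx L c w h := by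
  obtain ⟨v, d⟩ := e
  constructor
  · rintro ⟨i, j, h1, h2, h3, h4, h5⟩
    apply he
    refine ⟨i, j, h5, ?_⟩
    split_ifs <;> omega
  · rintro ⟨i, j, h1, h2, h3, h4, h5⟩
    apply he
    obtain ⟨i, rfl⟩ : ∃ k, i = k + 1 := ⟨i - 1, by omega⟩
    obtain ⟨j, rfl⟩ : ∃ k, j = k + 1 := ⟨j - 1, by omega⟩
    cases d
    · refine ⟨i, j + 1, ?_, by simp; omega⟩
      have h6 : v + (1, 0) = pt c i (j + 1) + (1, 0) := by
        rw [pt_right]; simpa [tgt, pt] using h5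
      exact add_right_cancel h6
    · refine ⟨i + 1, j, ?_, by simp; omega⟩
      have h6 : v + (0, 1) = pt c (i + 1) j + (0, 1) := by
        rw [pt_up]; simpa [tgt, pt] using h5
      exact add_right_cancel h6

theorem rho_supp {G : Type} [Group G] [Fintype G] {L : ℕ} [NeZero L] {ψ : H G L}
    (hψ : ψ ∈ groundSpace G L) (c : Vtx L) {w h : ℕ} (hwL : w + 1 < L) (hhL : h + 1 < L)
    (a a') (hne : rho (rectEdges L c w h) ψ a a' ≠ 0) :
    ∃ s t t', a = grad (rectEdges L c w h) (extf c w h (s, t)) ∧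
      a' = grad (rectEdges L c w h) (extf c w h (s, t')) := by
  simp only [rho, Matrix.of_apply] at hne
  obtain ⟨b, -, hb⟩ := Finset.exists_ne_zero_of_sum_ne_zero hne
  have hx := gs_flat hψ c _ (left_ne_zero_of_mul hb)
  have hy := gs_flat hψ c (merge (rectEdges L c w h) a' b) (by
    have := right_ne_zero_of_mul hb
    intro h0; rw [h0] at this; simp at this)
  have hxy : ∀ e, e ∉ rectEdges L c w h →
      merge (rectEdges L c w h) a b e = merge (rectEdges L c w h) a' b e := by
    intro e he; simp [merge, he]
  have hT := tr_bdry c hwL hhL _ _ hx hy hxy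
  have ha := grad_trf c hwL hhL _ hx
  have ha' := grad_trf c hwL hhL _ hy
  set x := merge (rectEdges L c w h) a b with hxd
  set y := merge (rectEdges L c w h) a' b with hyd
  refine ⟨fun v => trf c x v.1, fun v => trf c x v.1, fun v => trf c y v.1, ?_, ?_⟩
  · rw [grad_extf c hwL hhL _ (trf_c c x)]
    funext e
    rw [ha, hxd]; simp [merge]
  · have : (fun v : {v : Vtx L // v ∈ rectBdryVtx L c w h ∧ v ≠ c} => trf c x v.1)
        = fun v => trf c y v.1 := by
      funext ⟨v, hv⟩
      obtain ⟨i, j, hi, hj, hb, hv'⟩ := hv.1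
      obtain rfl : v = pt c i j := hv'
      simp only
      rw [trf_pt c x (by omega) (by omega), trf_pt c y (by omega) (by omega), hT i j hi hj hb]
    rw [this, grad_extf c hwL hhL _ (trf_c c y)]
    funext e
    rw [ha', hyd]; simp [merge]

theorem rho_trace {S : Type} [Fintype S] {L : ℕ} [NeZero L] (A : Set (Edge L))
    (ψ : (Edge L → S) → ℂ) : (rho A ψ).trace = finner ψ ψ := by
  simp only [Matrix.trace, Matrix.diag_apply, rho, Matrix.of_apply, finner]
  rw [← Equiv.sum_comp (Equiv.piEquivPiSubtypeProd (fun e => e ∈ A) (fun _ => S)).symm,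
    Fintype.sum_prod_type]
  apply Finset.sum_congr rfl
  intro a _
  apply Finset.sum_congr rfl
  intro b _
  have : (Equiv.piEquivPiSubtypeProd (fun e => e ∈ A) (fun _ => S)).symm (a, b) = merge A a b := by
    funext e
    simp [merge, Equiv.piEquivPiSubtypeProd]
  rw [this, mul_comm]

theorem rho_herm {S : Type} [Fintype S] {L : ℕ} [NeZero L] (A : Set (Edge L))
    (ψ : (Edge L → S) → ℂ) : (rho A ψ).IsHermitian := by
  ext a a'
  simp only [Matrix.conjTranspose_apply, rho, Matrix.of_apply]
  rw [← starRingEnd_apply, map_sum]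
  refine Finset.sum_congr rfl fun b _ => ?_
  rw [map_mul, Complex.conj_conj, mul_comm]

/-- **Entanglement entropy of the ground state and the topological
entanglement entropy.**  Let `ψ` be a normalized ground state of Kitaev's
quantum double model and `A` a `w × h` rectangle contained in a contractible
subregion, with `ℓ = 2(w+h)` boundary edges.  Then the reduced state
`ρ_A = Tr_{Ā}|ψ⟩⟨ψ|` is the maximally mixed state on a subspace of dimension
`|G|^{ℓ−1}`, and hence its von Neumann entropy is
`S(ρ_A) = (ℓ−1)·log|G| = ℓ·log|G| − log|G|`:
an exact area law `S = α·ℓ − γ` with `α = log|G|` and topological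
entanglement entropy `S_topo = −γ = −log|G|`. -/
theorem ground_state_entanglement_entropy
    (G : Type) [Group G] [Fintype G] (L : ℕ) [NeZero L] (c : Vtx L) (w h : ℕ)
    (hw : 0 < w) (hwL : w + 1 < L) (hh : 0 < h) (hhL : h + 1 < L)
    (ψ : H G L) (hψ : ψ ∈ groundSpace G L) (hnorm : finner ψ ψ = 1) :
    (∃ (W : Submodule ℂ (({e : Edge L // e ∈ rectEdges L c w h} → G) → ℂ))
       (Q : (({e : Edge L // e ∈ rectEdges L c w h} → G) → ℂ) →ₗ[ℂ]
            (({e : Edge L // e ∈ rectEdges L c w h} → G) → ℂ)),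
      Module.finrank ℂ W = Fintype.card G ^ (2 * (w + h) - 1) ∧
      IsOrthProjOnto Q W ∧
      Matrix.toLin' (rho (rectEdges L c w h) ψ) =
        ((Fintype.card G : ℂ) ^ (2 * (w + h) - 1))⁻¹ • Q) ∧
    ∃ hherm : (rho (rectEdges L c w h) ψ).IsHermitian,
      vnEntropy hherm =
        (2 * (w + h) : ℝ) * Real.log (Fintype.card G) - Real.log (Fintype.card G) := by
  have hS : Fintype.card ({v : Vtx L // v ∈ rectBdryVtx L c w h ∧ v ≠ c} → G)
      = Fintype.card G ^ (2 * (w + h) - 1) := by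
    rw [Fintype.card_fun, card_bdry c hw hh hwL hhL]
  have htr : (rho (rectEdges L c w h) ψ).trace = 1 := by rw [rho_trace, hnorm]
  have hsq := la_block _ (iota_inj (G := G) c hwL hhL) (rho (rectEdges L c w h) ψ) _
    (fun s t t' => rho_grad hψ _ _ _ (fun e he =>
      ⟨extf_out c s t t' _ (out_not_int c e he).1, extf_out c s t t' _ (out_not_int c e he).2⟩))
    (rho_supp hψ c hwL hhL) htr
  have hG : 0 < Fintype.card G := Fintype.card_pos
  have hmain := la_main (rho (rectEdges L c w h) ψ) _ Fintype.card_pos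
    (rho_herm _ _) htr hsq
  rw [hS] at hmain
  push_cast at hmain
  refine ⟨hmain.1, rho_herm _ _, ?_⟩
  rw [hmain.2, Real.log_pow, Nat.cast_sub (by omega)]
  push_cast
  ring

end QDM
end
end

section
/- Let G be a finite group with set of inequivalent irreducible complex representations Ĝ, let d_R be the dimension of irrep R, and for an L-tuple R⃗ = (R₁,…,R_L) of irreps let N_{R⃗} be the dimension of the G-invariant subspace (the multiplicity of the trivial representation) of the tensor product R₁ ⊗ … ⊗ R_L under the diagonal G-action, and d_{R⃗} = Π_{i=1}^L d_{R_i}. Then Σ_{R⃗ ∈ Ĝ^L} d_{R⃗} · N_{R⃗} = |G|^{L−1} for every L ≥ 1. -/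
/-!
Representation-theoretic facts about multiplicities of the trivial
representation in tensor products of irreducibles, used in the computation of
the topological entanglement entropy of Kitaev's quantum double model.
-/

open scoped BigOperators TensorProduct Classical

noncomputable section

namespace QDM

/-- A representation is irreducible if its space is nonzero and has no proper
nonzero invariant subspace. -/
def IsIrred {G W : Type} [Group G] [AddCommGroup W] [Module ℂ W]
    (ρ : Representation ℂ G W) : Prop :=
  Nontrivial W ∧
    ∀ p : Submodule ℂ W, (∀ (g : G), ∀ x ∈ p, ρ g x ∈ p) → p = ⊥ ∨ p = ⊤

/-- Two representations are isomorphic if there is a `G`-equivariant linear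
isomorphism between them. -/
def RepIso {G W U : Type} [Group G] [AddCommGroup W] [Module ℂ W]
    [AddCommGroup U] [Module ℂ U]
    (ρ : Representation ℂ G W) (σ : Representation ℂ G U) : Prop :=
  ∃ e : W ≃ₗ[ℂ] U, ∀ (g : G) (x : W), e (ρ g x) = σ g (e x)

/-- `(W i, ρ i)_{i : ι}` is a complete family of pairwise non-isomorphic
irreducible complex representations of `G` — i.e. `ι` is (a copy of) `Ĝ`. -/
structure CompleteIrrepFamily (G : Type) [Group G] (ι : Type) (W : ι → Type)
    [∀ i, AddCommGroup (W i)] [∀ i, Module ℂ (W i)]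
    (ρ : ∀ i, Representation ℂ G (W i)) : Prop where
  finiteDim : ∀ i, FiniteDimensional ℂ (W i)
  irred : ∀ i, IsIrred (ρ i)
  nonIso : ∀ i j, i ≠ j → ¬ RepIso (ρ i) (ρ j)
  complete : ∀ (U : Type) [AddCommGroup U] [Module ℂ U] [FiniteDimensional ℂ U]
    (σ : Representation ℂ G U), IsIrred σ → ∃ i, RepIso σ (ρ i)

/-- The diagonal action of `G` on the tensor product `⨂ᵢ Wᵢ` of a family of
representations. -/
noncomputable def piTensorRep {G : Type} [Group G] {κ : Type} [Fintype κ]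
    {W : κ → Type} [∀ k, AddCommGroup (W k)] [∀ k, Module ℂ (W k)]
    (ρ : ∀ k, Representation ℂ G (W k)) :
    Representation ℂ G (⨂[ℂ] k, W k) :=
  (PiTensorProduct.mapMonoidHom).comp (Pi.monoidHom ρ)

/-- `Ninv ρ R` is the dimension of the subspace of `G`-invariant vectors of the
tensor product `R₁ ⊗ ⋯ ⊗ R_L` under the diagonal action, i.e. the multiplicity
`N_{R⃗}` of the trivial representation. -/
noncomputable def Ninv {G ι : Type} [Group G] {W : ι → Type}
    [∀ i, AddCommGroup (W i)] [∀ i, Module ℂ (W i)]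
    (ρ : ∀ i, Representation ℂ G (W i)) {Lc : ℕ} (R : Fin Lc → ι) : ℕ :=
  Module.finrank ℂ (piTensorRep fun k => ρ (R k)).invariants

/-- The submodule of `G`-equivariant linear maps between two representations.
Its dimension (over `ℂ`, where representations of a finite group are
semisimple) is the multiplicity `N_{r → Q}` of the irreducible `r` in `Q`. -/
def equivMaps {G W U : Type} [Group G] [AddCommGroup W] [Module ℂ W]
    [AddCommGroup U] [Module ℂ U]
    (ρ : Representation ℂ G W) (σ : Representation ℂ G U) :
    Submodule ℂ (W →ₗ[ℂ] U) where
  carrier := { f | ∀ (g : G) (x : W), f (ρ g x) = σ g (f x) }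
  add_mem' := by
    intro f₁ f₂ h₁ h₂ g x
    simp [h₁ g x, h₂ g x]
  zero_mem' := by intro g x; simp
  smul_mem' := by
    intro t f hf g x
    simp [hf g x]

end QDM

namespace QDM

/-- Irreducibility in the sense of the paper implies Mathlib's notion. -/
theorem IsIrred.isIrreducible {G W : Type} [Group G] [AddCommGroup W] [Module ℂ W]
    {ρ : Representation ℂ G W} (h : IsIrred ρ) : ρ.IsIrreducible := by
  obtain ⟨hn, hp⟩ := h
  refine { exists_pair_ne := ⟨⊥, ⊤, ?_⟩, eq_bot_or_eq_top := ?_ }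
  · intro e
    exact bot_ne_top (α := Submodule ℂ W) (congrArg Subrepresentation.toSubmodule e)
  · intro a
    rcases hp a.toSubmodule (fun g x hx => a.apply_mem_toSubmodule g hx) with h | h
    · exact Or.inl (Subrepresentation.toSubmodule_injective h)
    · exact Or.inr (Subrepresentation.toSubmodule_injective h)

theorem trace_piTensorRep {G : Type} [Group G] {κ : Type} [Fintype κ]
    {W : κ → Type} [∀ k, AddCommGroup (W k)] [∀ k, Module ℂ (W k)]
    [∀ k, FiniteDimensional ℂ (W k)]
    (ρ : ∀ k, Representation ℂ G (W k)) (g : G) :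
    (piTensorRep ρ).character g = ∏ k, (ρ k).character g := by
  let b := fun k => Module.finBasis ℂ (W k)
  unfold Representation.character
  rw [LinearMap.trace_eq_matrix_trace ℂ (Basis.piTensorProduct b)]
  simp_rw [fun k => LinearMap.trace_eq_matrix_trace ℂ (b k) (ρ k g)]
  simp only [Matrix.trace, Matrix.diag_apply, LinearMap.toMatrix_apply]
  rw [Fintype.prod_sum]
  refine Finset.sum_congr rfl fun p _ => ?_
  rw [Basis.piTensorProduct_apply]
  have : piTensorRep ρ g (⨂ₜ[ℂ] i, (b i) (p i)) = ⨂ₜ[ℂ] i, (ρ i g ((b i) (p i))) := by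
    simp [piTensorRep, PiTensorProduct.mapMonoidHom]
    rfl
  rw [this, Basis.piTensorProduct_repr_tprod_apply]

theorem trace_compl {U : Type} [AddCommGroup U] [Module ℂ U] [FiniteDimensional ℂ U]
    (p q : Submodule ℂ U) (h : IsCompl p q) (f : U →ₗ[ℂ] U)
    (hp : ∀ x ∈ p, f x ∈ p) (hq : ∀ x ∈ q, f x ∈ q) :
    LinearMap.trace ℂ U f =
      LinearMap.trace ℂ p (f.restrict hp) + LinearMap.trace ℂ q (f.restrict hq) := by
  rw [← LinearMap.trace_prodMap', ← LinearMap.trace_conj' _ (Submodule.prodEquivOfIsCompl p q h)]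
  congr 1
  ext x
  obtain ⟨y, rfl⟩ := (Submodule.prodEquivOfIsCompl p q h).surjective x
  simp [LinearEquiv.conj_apply]

theorem char_decomp {G : Type} [Group G] [Fintype G] {ι : Type} [Fintype ι] {W : ι → Type}
    [∀ i, AddCommGroup (W i)] [∀ i, Module ℂ (W i)]
    {ρ : ∀ i, Representation ℂ G (W i)}
    (hfam : CompleteIrrepFamily G ι W ρ) (n : ℕ) :
    ∀ (U : Type) [AddCommGroup U] [Module ℂ U] [FiniteDimensional ℂ U]
      (σ : Representation ℂ G U), Module.finrank ℂ U = n →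
      ∃ m : ι → ℂ, ∀ g, σ.character g = ∑ i, m i * (ρ i).character g := by
  induction n using Nat.strong_induction_on with
  | _ n ih =>
  intro U _ _ _ σ hn
  by_cases hirr : IsIrred σ
  · obtain ⟨i, e, he⟩ := hfam.complete U σ hirr
    refine ⟨fun j => if j = i then 1 else 0, fun g => ?_⟩
    have := Representation.char_iso (Representation.Equiv.mk (ρ := σ) (σ := ρ i) e
      (fun g => LinearMap.ext fun x => he g x))
    simp [this]
  by_cases hU : Nontrivial U
  · simp only [IsIrred, hU, true_and, not_forall, not_or] at hirr
    obtain ⟨p, hp, hbot, htop⟩ := hirr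
    let P : Subrepresentation σ := ⟨p, fun g x hx => hp g x hx⟩
    obtain ⟨Q, hPQ⟩ := exists_isCompl P
    have hc : IsCompl p Q.toSubmodule := by
      rw [isCompl_iff, disjoint_iff, codisjoint_iff] at hPQ ⊢
      exact ⟨congrArg Subrepresentation.toSubmodule hPQ.1,
        congrArg Subrepresentation.toSubmodule hPQ.2⟩
    have hsum := Submodule.finrank_add_eq_of_isCompl hc
    have h1 : Module.finrank ℂ p ≠ 0 := by
      rwa [Ne, Submodule.finrank_eq_zero]
    have h2 : Module.finrank ℂ p < Module.finrank ℂ U := Submodule.finrank_lt htop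
    obtain ⟨m₁, hm₁⟩ := ih (Module.finrank ℂ p) (by omega) P.toSubmodule P.toRepresentation rfl
    obtain ⟨m₂, hm₂⟩ := ih (Module.finrank ℂ Q.toSubmodule) (by omega) Q.toSubmodule
      Q.toRepresentation rfl
    refine ⟨fun i => m₁ i + m₂ i, fun g => ?_⟩
    simp only [add_mul, Finset.sum_add_distrib]
    rw [← hm₁, ← hm₂]
    exact trace_compl p Q.toSubmodule hc (σ g) (hp g)
      (fun x hx => Q.apply_mem_toSubmodule g hx)
  · rw [not_nontrivial_iff_subsingleton] at hU
    refine ⟨0, fun g => ?_⟩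
    have : σ g = 0 := LinearMap.ext fun x => Subsingleton.elim _ _
    simp [Representation.character, this]

/-- The right regular representation on functions. -/
def regRep (G : Type) [Group G] : Representation ℂ G (G → ℂ) where
  toFun g := LinearMap.funLeft ℂ ℂ (fun x => x * g)
  map_one' := by ext; simp [LinearMap.funLeft]
  map_mul' a b := by
    refine LinearMap.ext fun f => funext fun x => ?_
    simp [LinearMap.funLeft_apply, mul_assoc]

theorem regRep_char (G : Type) [Group G] [Fintype G] (g : G) :
    (regRep G).character g = if g = 1 then (Fintype.card G : ℂ) else 0 := by
  unfold Representation.character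
  rw [LinearMap.trace_eq_matrix_trace ℂ (Pi.basisFun ℂ G)]
  simp only [Matrix.trace, Matrix.diag_apply, LinearMap.toMatrix_apply]
  simp [regRep, LinearMap.funLeft_apply, Pi.single_apply]

theorem sum_dim_char {G : Type} [Group G] [Fintype G] {ι : Type} [Fintype ι] {W : ι → Type}
    [∀ i, AddCommGroup (W i)] [∀ i, Module ℂ (W i)]
    {ρ : ∀ i, Representation ℂ G (W i)}
    (hfam : CompleteIrrepFamily G ι W ρ) (g : G) :
    ∑ i, (Module.finrank ℂ (W i) : ℂ) * (ρ i).character g =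
      if g = 1 then (Fintype.card G : ℂ) else 0 := by
  have hfd := hfam.finiteDim
  have hI := fun i => (hfam.irred i).isIrreducible
  have hcard : (Nat.card G : ℂ) ≠ 0 := by simp
  have : Invertible (Nat.card G : ℂ) := invertibleOfNonzero hcard
  obtain ⟨m, hm⟩ := char_decomp hfam _ (G → ℂ) (regRep G) rfl
  have horth : ∀ i j, (Nat.card G : ℂ)⁻¹ * ∑ g : G, (ρ i).character g * (ρ j).character g⁻¹ =
      if i = j then 1 else 0 := by
    intro i j
    rw [Representation.char_orthonormal]
    by_cases h : i = j
    · subst h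
      simp [show Nonempty ((ρ i).Equiv (ρ i)) from ⟨.refl _⟩]
    · rw [if_neg h, if_neg]
      rintro ⟨e⟩
      exact hfam.nonIso j i (Ne.symm h) ⟨e.toLinearEquiv, fun g x =>
        Representation.IntertwiningMap.isIntertwining _ _ e.toIntertwiningMap g x⟩
  have key : ∀ j, m j = Module.finrank ℂ (W j) := by
    intro j
    have h1 : (Nat.card G : ℂ)⁻¹ * ∑ g : G, (regRep G).character g * (ρ j).character g⁻¹ =
        Module.finrank ℂ (W j) := by
      simp only [regRep_char, ite_mul, zero_mul, Finset.sum_ite_eq', Finset.mem_univ, if_true]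
      rw [inv_one, Representation.char_one, ← Nat.card_eq_fintype_card, inv_mul_cancel_left₀ hcard]
    rw [← h1]
    simp only [hm, Finset.sum_mul]
    rw [Finset.sum_comm]
    simp only [mul_assoc, ← Finset.mul_sum]
    rw [Finset.mul_sum]
    simp only [mul_left_comm _ (m _), horth]
    simp
  rw [← regRep_char, hm]
  simp [key]

/-- **Counting identity (eq. (49) of the paper).**  Let `Ĝ = {Wᵢ}` be a complete
family of irreducible complex representations of the finite group `G`, let
`d_R = dim R`, and for an `L`-tuple `R⃗` of irreps let `N_{R⃗}` be the
multiplicity of the trivial representation in `R₁ ⊗ ⋯ ⊗ R_L` under the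
diagonal action and `d_{R⃗} = ∏ᵢ d_{Rᵢ}`.  Then for every `L ≥ 1`,
`∑_{R⃗ ∈ Ĝ^L} d_{R⃗} N_{R⃗} = |G|^{L−1}`. -/
theorem sum_dim_mul_invariants_eq_card_pow
    (G : Type) [Group G] [Fintype G] (ι : Type) [Fintype ι] (W : ι → Type)
    [∀ i, AddCommGroup (W i)] [∀ i, Module ℂ (W i)]
    (ρ : ∀ i, Representation ℂ G (W i))
    (hfam : CompleteIrrepFamily G ι W ρ)
    (Lc : ℕ) (hLc : 1 ≤ Lc) :
    ∑ R : Fin Lc → ι, (∏ k, Module.finrank ℂ (W (R k))) * Ninv ρ R =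
      Fintype.card G ^ (Lc - 1) := by
  have hfd := hfam.finiteDim
  have hcard : (Nat.card G : ℂ) ≠ 0 := by simp
  have : Invertible (Nat.card G : ℂ) := invertibleOfNonzero hcard
  have hN : ∀ R : Fin Lc → ι, (Ninv ρ R : ℂ) =
      (Nat.card G : ℂ)⁻¹ * ∑ g : G, ∏ k, (ρ (R k)).character g := by
    intro R
    unfold Ninv
    rw [← Representation.card_inv_mul_sum_char_eq_finrank]
    simp only [trace_piTensorRep]
  have hC : ((∑ R : Fin Lc → ι, (∏ k, Module.finrank ℂ (W (R k))) * Ninv ρ R : ℕ) : ℂ) =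
      ((Fintype.card G ^ (Lc - 1) : ℕ) : ℂ) := by
    push_cast
    simp only [hN, mul_left_comm _ (Nat.card G : ℂ)⁻¹, Finset.mul_sum, ← Finset.prod_mul_distrib]
    rw [Finset.sum_comm]
    simp only [← Finset.mul_sum]
    have : ∀ g : G, ∑ R : Fin Lc → ι,
        ∏ k, ((Module.finrank ℂ (W (R k)) : ℂ) * (ρ (R k)).character g) =
        if g = 1 then (Fintype.card G : ℂ) ^ Lc else 0 := by
      intro g
      rw [← Fintype.prod_sum (fun (_ : Fin Lc) i =>
        (Module.finrank ℂ (W i) : ℂ) * (ρ i).character g)]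
      rw [Finset.prod_const, sum_dim_char hfam]
      split_ifs
      · simp
      · simp; omega
    simp only [this, Finset.sum_ite_eq', Finset.mem_univ, if_true]
    obtain ⟨n, rfl⟩ : ∃ n, Lc = n + 1 := ⟨Lc - 1, by omega⟩
    rw [← Nat.card_eq_fintype_card, pow_succ', inv_mul_cancel_left₀ hcard]
    simp
  exact_mod_cast hC

end QDM
end
end
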